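/- arXiv:2004.07550 — 4 statements merged into one kernel-verified Lean document; each statement's English description precedes it below -/
import Mathlib

section
/- Let X ⊆ ℤ^n and Y ⊆ ℤ^m be finite digital images with c1-adjacency, where n, m ≤ 4, and let f : X → Y and g : Y → X be c1-continuous maps. Then L̄(f ∘ g) = L̄(g ∘ f), where f ∘ g : Y → Y and g ∘ f : X → X. -/
/-- `c1`-adjacency on `ℤ^n`: `x, y` are `c1`-adjacent iff `∑ i, |x i − y i| = 1`. -/
def c1Adj {n : ℕ} (x y : Fin n → ℤ) : Prop := (∑ i, |x i - y i|) = 1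

/-- `f` is `c1`-continuous on the digital image `X ⊆ ℤ^n`: `c1`-adjacent points of `X` have
equal or `c1`-adjacent images. -/
def c1Cont {n m : ℕ} (X : Finset (Fin n → ℤ)) (f : (Fin n → ℤ) → (Fin m → ℤ)) : Prop :=
  ∀ x ∈ X, ∀ y ∈ X, c1Adj x y → f x = f y ∨ c1Adj (f x) (f y)

/-- `f` maps the digital image `X` into the digital image `Y`. -/
def MapsInto {n m : ℕ} (X : Finset (Fin n → ℤ)) (Y : Finset (Fin m → ℤ))
    (f : (Fin n → ℤ) → (Fin m → ℤ)) : Prop :=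
  ∀ x ∈ X, f x ∈ Y

/-- The elementary cube `σ = t_1 × ⋯ × t_n ⊆ ℤ^n` with minimal corner `a`, where
`t_i = {a i, a i + 1}` for `i ∈ D` (the nondegenerate directions, so `dim σ = D.card`)
and `t_i = {a i}` otherwise. -/
def eCube {n : ℕ} (a : Fin n → ℤ) (D : Finset (Fin n)) : Finset (Fin n → ℤ) :=
  D.powerset.image (fun s i => a i + if i ∈ s then 1 else 0)

/-- A homotopy between continuous maps `f, g : X → Y` is `H : X × {0,…,k} → Y` with
`H(x,0) = f(x)`, `H(x,k) = g(x)`, sending consecutive stages of each point to equal or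
adjacent points, and continuous at each stage; `f ≃ g` iff such an `H` exists. -/
def c1Homotopic {n m : ℕ} (X : Finset (Fin n → ℤ)) (Y : Finset (Fin m → ℤ))
    (f g : (Fin n → ℤ) → (Fin m → ℤ)) : Prop :=
  ∃ (k : ℕ) (H : (Fin n → ℤ) → ℕ → (Fin m → ℤ)),
    (∀ x ∈ X, ∀ t ≤ k, H x t ∈ Y) ∧
    (∀ x ∈ X, H x 0 = f x) ∧ (∀ x ∈ X, H x k = g x) ∧
    (∀ x ∈ X, ∀ t, t + 1 ≤ k → (H x t = H x (t + 1) ∨ c1Adj (H x t) (H x (t + 1)))) ∧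
    (∀ t ≤ k, ∀ x ∈ X, ∀ x' ∈ X, c1Adj x x' → (H x t = H x' t ∨ c1Adj (H x t) (H x' t)))

/-- `x` is a `k`-approximate fixed point of `f` on `X`: there is a `c1`-path in `X` from
`x` to `f x` of length at most `k`. -/
def nApproxFix {n : ℕ} (X : Finset (Fin n → ℤ)) (f : (Fin n → ℤ) → (Fin n → ℤ))
    (k : ℕ) (x : Fin n → ℤ) : Prop :=
  ∃ (m : ℕ) (p : ℕ → (Fin n → ℤ)), m ≤ k ∧ p 0 = x ∧ p m = f x ∧
    (∀ t ≤ m, p t ∈ X) ∧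
    (∀ t, t + 1 ≤ m → (p t = p (t + 1) ∨ c1Adj (p t) (p (t + 1))))

open Classical in
/-- `ε(f, σ)` for `σ = eCube a D` with `f(σ) = σ`: on the nondegenerate directions `D` of
`σ`, `f` is given by an affine map `x ↦ b + Mx` with `M` a signed permutation matrix
(a permutation `π` of `D` together with signs `s : D → {±1}`), and
`ε(f,σ) = det M = sgn(π) ⬝ ∏ s`. (Junk value `0` if `f` is not of this form on `σ`.) -/
noncomputable def cubeSign {n : ℕ} (f : (Fin n → ℤ) → (Fin n → ℤ))
    (a : Fin n → ℤ) (D : Finset (Fin n)) : ℤ :=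
  if h : ∃ p : Equiv.Perm {i // i ∈ D} × ({i // i ∈ D} → ℤ),
      (∀ i, p.2 i = 1 ∨ p.2 i = -1) ∧
      ∀ x ∈ eCube a D, ∀ i : {i // i ∈ D},
        f x (i : Fin n) = f a (i : Fin n) + p.2 i * (x ((p.1 i : Fin n)) - a ((p.1 i : Fin n)))
  then ((Equiv.Perm.sign h.choose.1 : ℤˣ) : ℤ) * ∏ i, h.choose.2 i
  else 0

open Classical in
/-- The cubical Lefschetz number `L̄(f) = ∑_σ (−1)^{dim σ} ε(f,σ)`, summing over all
elementary cubes `σ ⊆ X` with `f(σ) = σ`. -/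
noncomputable def cubLef {n : ℕ} (X : Finset (Fin n → ℤ))
    (f : (Fin n → ℤ) → (Fin n → ℤ)) : ℤ :=
  ∑ a ∈ X, ∑ D : Finset (Fin n),
    if eCube a D ⊆ X ∧ (eCube a D).image f = eCube a D then
      (-1 : ℤ) ^ D.card * cubeSign f a D
    else 0

open Classical in
/-- The cubical Euler characteristic `χ̄(X) = ∑_q (−1)^q k_q`, with `k_q` the number of
elementary cubes of dimension `q` contained in `X`. -/
noncomputable def cubEuler {n : ℕ} (X : Finset (Fin n → ℤ)) : ℤ :=
  ∑ a ∈ X, ∑ D : Finset (Fin n),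
    if eCube a D ⊆ X then (-1 : ℤ) ^ D.card else 0

/-!
If `g ∘ f` permutes a cube `σ`, then `f` is injective on `σ`, and an injective `c1`-continuous map
carries opposite edges of a square to parallel edges. Hence `f` maps `σ` affinely onto a cube `τ`,
by a signed permutation `P` of the directions; likewise `g` maps `τ` back onto `σ` by a signed
permutation `Q`. So `σ ↦ f(σ)` is a dimension-preserving bijection between the cubes fixed by
`g ∘ f` and those fixed by `f ∘ g`, with inverse `τ ↦ g(τ)`, and it preserves the signs because
`det (Q P) = det (P Q)`.
-/

section UnitStep

variable {ι : Type*} [DecidableEq ι]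

/-- A unit step in `ℤ^ι`: one of the vectors `± e_i`, i.e. the displacement along an edge of the
`c1`-adjacency graph. -/
def IsUnitStep (v : ι → ℤ) : Prop := ∃ (i : ι) (s : ℤˣ), v = Pi.single i (s : ℤ)

theorem IsUnitStep.neg {v : ι → ℤ} (hv : IsUnitStep v) : IsUnitStep (-v) := by
  obtain ⟨i, s, rfl⟩ := hv
  exact ⟨i, -s, by rw [Units.val_neg, Pi.single_neg]⟩

theorem IsUnitStep.dotProduct_self [Fintype ι] {v : ι → ℤ} (hv : IsUnitStep v) : v ⬝ᵥ v = 1 := by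
  obtain ⟨i, s, rfl⟩ := hv
  rw [single_dotProduct, Pi.single_eq_same, ← Units.val_mul, Int.units_mul_self, Units.val_one]

theorem IsUnitStep.eq_of_dotProduct_pos [Fintype ι] {u v : ι → ℤ} (hu : IsUnitStep u)
    (hv : IsUnitStep v) (h : 0 < u ⬝ᵥ v) : u = v := by
  obtain ⟨i, s, rfl⟩ := hu
  obtain ⟨k, r, rfl⟩ := hv
  rw [single_dotProduct] at h
  obtain rfl : i = k := by
    by_contra hik
    rw [Pi.single_eq_of_ne hik, mul_zero] at h
    exact h.false
  rw [Pi.single_eq_same] at h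
  rcases Int.units_eq_one_or s with rfl | rfl <;> rcases Int.units_eq_one_or r with rfl | rfl <;>
    simp_all

/-- Pairing the identity with `u` gives `1 + u ⬝ t = u ⬝ w + u ⬝ r`, in which `u ⬝ t ≥ 0` and
`u ⬝ w ≤ 0`, so `r = u`. -/
theorem IsUnitStep.eq_of_add_eq_add [Finite ι] {u t w r : ι → ℤ} (hu : IsUnitStep u)
    (ht : IsUnitStep t) (hw : IsUnitStep w) (hr : IsUnitStep r) (h : u + t = w + r) (huw : u ≠ w)
    (hut : u + t ≠ 0) : t = w := by
  have := Fintype.ofFinite ι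
  have hpair : 1 + u ⬝ᵥ t = u ⬝ᵥ w + u ⬝ᵥ r := by
    rw [← hu.dotProduct_self, ← dotProduct_add, h, dotProduct_add]
  have hut_nonneg : 0 ≤ u ⬝ᵥ t := by
    by_contra! hneg
    refine hut (eq_neg_iff_add_eq_zero.1 (hu.eq_of_dotProduct_pos ht.neg ?_))
    rwa [dotProduct_neg, neg_pos]
  have huw_nonpos : u ⬝ᵥ w ≤ 0 := not_lt.1 fun hpos ↦ huw (hu.eq_of_dotProduct_pos hw hpos)
  obtain rfl : u = r := hu.eq_of_dotProduct_pos hr (by linarith)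
  rw [add_comm w] at h
  exact add_left_cancel h

end UnitStep

theorem c1Adj_iff_isUnitStep_sub {n : ℕ} {x y : Fin n → ℤ} : c1Adj x y ↔ IsUnitStep (y - x) := by
  constructor
  · intro h
    let d : Fin n →₀ ℕ := Finsupp.equivFunOnFinite.symm fun i ↦ (y i - x i).natAbs
    have hd : d.sum (fun _ k ↦ k) = 1 := by
      rw [Finsupp.sum_fintype _ _ fun _ ↦ rfl]
      zify
      simpa [d, c1Adj, abs_sub_comm] using h
    obtain ⟨i, hi⟩ := (Finsupp.sum_eq_one_iff d).1 hd
    have hnatAbs (k) : (y k - x k).natAbs = if i = k then 1 else 0 := by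
      simpa [d, Finsupp.single_apply] using DFunLike.congr_fun hi k
    refine ⟨i, (Int.isUnit_iff_natAbs_eq.2 ((hnatAbs i).trans (if_pos rfl))).unit, ?_⟩
    funext k
    by_cases hk : i = k
    · subst hk
      simp
    · simpa [hk, Ne.symm hk] using hnatAbs k
  · rintro ⟨i, s, h⟩
    have habs (k) : |x k - y k| = if k = i then 1 else 0 := by
      rw [abs_sub_comm, ← Pi.sub_apply, h]
      by_cases hk : k = i
      · subst hk
        rw [Pi.single_eq_same, if_pos rfl, Int.isUnit_iff_abs_eq.1 s.isUnit]
      · rw [Pi.single_eq_of_ne hk, if_neg hk, abs_zero]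
    simp only [c1Adj, habs, Finset.sum_ite_eq', Finset.mem_univ, if_true]

section Hypercube

variable {κ ι : Type*} [DecidableEq κ] [DecidableEq ι] {F : Finset κ → ι → ℤ}

/-- An injective drawing in `ℤ^ι` of the hypercube graph on the subsets of `κ`: inserting one
element into `T` moves `F T` by a unit step. -/
structure IsUnitStepHypercube (F : Finset κ → ι → ℤ) : Prop where
  injective : Function.Injective F
  isUnitStep : ∀ T, ∀ k ∉ T, IsUnitStep (F (insert k T) - F T)

namespace IsUnitStepHypercube

variable [Finite ι]

theorem step_insert (hF : IsUnitStepHypercube F) {T : Finset κ} {k l : κ}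
    (hk : k ∉ insert l T) (hl : l ∉ T) :
    F (insert k (insert l T)) - F (insert l T) = F (insert k T) - F T := by
  obtain ⟨hkl, hkT⟩ : k ≠ l ∧ k ∉ T := by simpa using hk
  have hl' : l ∉ insert k T := by simp [hl, hkl.symm]
  refine (hF.isUnitStep T l hl).eq_of_add_eq_add (hF.isUnitStep _ k hk) (hF.isUnitStep T k hkT)
    (hF.isUnitStep _ l hl') ?_ ?_ ?_
  · rw [Finset.insert_comm k l T]
    abel
  · intro h
    have : insert l T = insert k T := hF.injective (sub_left_injective h)
    exact hk (this ▸ Finset.mem_insert_self k T)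
  · intro h
    rw [add_comm, sub_add_sub_cancel, sub_eq_zero] at h
    exact hkT (hF.injective h ▸ Finset.mem_insert_self k _)

theorem step_eq_step_empty (hF : IsUnitStepHypercube F) {T : Finset κ} {k : κ}
    (hk : k ∉ T) : F (insert k T) - F T = F {k} - F ∅ := by
  induction T using Finset.induction_on with
  | empty => rfl
  | insert l T hl ih =>
    rw [hF.step_insert hk hl, ih fun h ↦ hk (Finset.mem_insert_of_mem h)]

theorem eq_add_sum_steps (hF : IsUnitStepHypercube F) (T : Finset κ) :
    F T = F ∅ + ∑ k ∈ T, (F {k} - F ∅) := by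
  induction T using Finset.induction_on with
  | empty => rw [Finset.sum_empty, add_zero]
  | insert k T hk ih =>
    rw [Finset.sum_insert hk, add_left_comm, ← ih, ← hF.step_eq_step_empty hk,
      sub_add_cancel]

theorem exists_eq_add_sum_single (hF : IsUnitStepHypercube F) :
    ∃ (j : κ → ι) (s : κ → ℤˣ), Function.Injective j ∧
      ∀ T, F T = F ∅ + ∑ k ∈ T, Pi.single (j k) (s k : ℤ) := by
  choose j s hjs using fun k ↦ hF.isUnitStep ∅ k (Finset.notMem_empty k)
  simp only [insert_empty_eq] at hjs
  have hsum : ∀ T, F T = F ∅ + ∑ k ∈ T, Pi.single (j k) (s k : ℤ) := fun T ↦ by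
    simpa only [← hjs] using hF.eq_add_sum_steps T
  refine ⟨j, s, fun k l hj ↦ by_contra fun hkl ↦ ?_, hsum⟩
  by_cases hs : s k = s l
  · have : F {k} = F {l} := by
      rw [hsum {k}, hsum {l}, Finset.sum_singleton, Finset.sum_singleton, hj, hs]
    exact hkl (Finset.singleton_injective (hF.injective this))
  · have : F {k, l} = F ∅ := by
      rw [hsum, Finset.sum_pair hkl, hj, Int.units_ne_iff_eq_neg.1 hs, Units.val_neg, Pi.single_neg,
        neg_add_cancel, add_zero]
    exact Finset.insert_ne_empty k {l} (hF.injective this)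

end IsUnitStepHypercube

end Hypercube

section Cube

variable {n : ℕ} {a x : Fin n → ℤ} {D T : Finset (Fin n)}

/-- The vertex `a + ∑_{i ∈ T} e_i` of an elementary cube with minimal corner `a`. -/
def cubeVertex (a : Fin n → ℤ) (T : Finset (Fin n)) : Fin n → ℤ :=
  fun i ↦ a i + if i ∈ T then 1 else 0

theorem cubeVertex_empty (a : Fin n → ℤ) : cubeVertex a ∅ = a := by
  simp [cubeVertex, funext_iff]

theorem cubeVertex_injective (a : Fin n → ℤ) : Function.Injective (cubeVertex a) := by
  intro S T h
  ext i
  have hi : (if i ∈ S then (1 : ℤ) else 0) = if i ∈ T then 1 else 0 :=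
    add_left_cancel (congrFun h i)
  split_ifs at hi <;> simp_all

theorem cubeVertex_insert_sub {i : Fin n} (hi : i ∉ T) :
    cubeVertex a (insert i T) - cubeVertex a T = Pi.single i 1 := by
  funext k
  by_cases hk : k = i
  · subst hk
    simp [cubeVertex, hi]
  · simp [cubeVertex, hk]

theorem mem_eCube_iff_exists_cubeVertex : x ∈ eCube a D ↔ ∃ T ⊆ D, cubeVertex a T = x := by
  simp only [eCube, Finset.mem_image, Finset.mem_powerset]
  rfl

theorem cubeVertex_mem_eCube : cubeVertex a T ∈ eCube a D ↔ T ⊆ D := by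
  rw [mem_eCube_iff_exists_cubeVertex]
  exact ⟨fun ⟨_, hS, h⟩ ↦ cubeVertex_injective a h ▸ hS, fun hT ↦ ⟨T, hT, rfl⟩⟩

theorem self_mem_eCube (a : Fin n → ℤ) (D : Finset (Fin n)) : a ∈ eCube a D := by
  simpa only [cubeVertex_empty] using cubeVertex_mem_eCube.2 (Finset.empty_subset D)

theorem mem_eCube : x ∈ eCube a D ↔ ∀ i, x i = a i ∨ i ∈ D ∧ x i = a i + 1 := by
  rw [mem_eCube_iff_exists_cubeVertex]
  constructor
  · rintro ⟨T, hT, rfl⟩ i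
    by_cases hi : i ∈ T
    · exact .inr ⟨hT hi, by simp [cubeVertex, hi]⟩
    · exact .inl (by simp [cubeVertex, hi])
  · intro h
    refine ⟨D.filter fun i ↦ x i = a i + 1, Finset.filter_subset _ _, funext fun i ↦ ?_⟩
    rcases h i with hi | ⟨hD, hi⟩
    · simp [cubeVertex, hi]
    · simp [cubeVertex, hD, hi]

theorem card_eCube (a : Fin n → ℤ) (D : Finset (Fin n)) : (eCube a D).card = 2 ^ D.card := by
  rw [← Finset.card_powerset]
  exact Finset.card_image_of_injective _ (cubeVertex_injective a)

theorem eCube_injective2 : Function.Injective2 (eCube (n := n)) := by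
  intro a b D E h
  have corner_le {a b : Fin n → ℤ} {D E : Finset (Fin n)} (h : eCube a D = eCube b E) : b ≤ a :=
    fun i ↦ by
      rcases mem_eCube.1 (h ▸ self_mem_eCube a D) i with hi | ⟨-, hi⟩ <;> lia
  obtain rfl : a = b := (corner_le h.symm).antisymm (corner_le h)
  refine ⟨rfl, Finset.Subset.antisymm ?_ ?_⟩
  · rw [← cubeVertex_mem_eCube (a := a), ← h, cubeVertex_mem_eCube]
  · rw [← cubeVertex_mem_eCube (a := a), h, cubeVertex_mem_eCube]

theorem eq_of_forall_mul_sub_eq {i k : Fin n} (hi : i ∈ D) {s t : ℤ} (hs : s ≠ 0)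
    (h : ∀ x ∈ eCube a D, s * (x i - a i) = t * (x k - a k)) : i = k ∧ s = t := by
  have hvertex := h _ (cubeVertex_mem_eCube.2 (Finset.singleton_subset_iff.2 hi))
  by_cases hik : i = k
  · subst hik
    exact ⟨rfl, by simpa [cubeVertex] using hvertex⟩
  · exact absurd hvertex (by simp [cubeVertex, Ne.symm hik, hs])

end Cube

theorem c1Cont.mono {n m : ℕ} {S X : Finset (Fin n → ℤ)} {f : (Fin n → ℤ) → (Fin m → ℤ)}
    (hf : c1Cont X f) (hSX : S ⊆ X) : c1Cont S f :=
  fun x hx y hy ↦ hf x (hSX hx) y (hSX hy)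

theorem c1Cont.isUnitStep_sub {n m : ℕ} {S : Finset (Fin n → ℤ)} {f : (Fin n → ℤ) → (Fin m → ℤ)}
    (hf : c1Cont S f) (hinj : Set.InjOn f S) {x y : Fin n → ℤ} (hx : x ∈ S) (hy : y ∈ S)
    (hxy : c1Adj x y) : IsUnitStep (f y - f x) := by
  refine c1Adj_iff_isUnitStep_sub.1 ((hf x hx y hy hxy).resolve_left fun heq ↦ ?_)
  obtain rfl := hinj hx hy heq
  simp [c1Adj] at hxy

/-- `f` restricts on the cube `eCube a D` to an affine map onto `eCube b E` whose linear part is a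
signed permutation: it carries the direction `k ∈ D` to the direction `e k ∈ E` with sign `s k`. -/
structure IsSignedPermOn {n m : ℕ} (f : (Fin n → ℤ) → (Fin m → ℤ)) (a : Fin n → ℤ)
    (D : Finset (Fin n)) (b : Fin m → ℤ) (E : Finset (Fin m)) (e : D ≃ E) (s : D → ℤˣ) :
    Prop where
  image_eq : (eCube a D).image f = eCube b E
  sub_apply : ∀ x ∈ eCube a D, ∀ x' ∈ eCube a D, ∀ k : D,
    f x (e k) - f x' (e k) = s k * (x k - x' k)

section InjectiveOnCube

variable {n m : ℕ} {f : (Fin n → ℤ) → (Fin m → ℤ)} {a : Fin n → ℤ} {D : Finset (Fin n)}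

theorem exists_sub_eq_sum_single (hf : c1Cont (eCube a D) f) (hinj : Set.InjOn f (eCube a D)) :
    ∃ (j : D → Fin m) (s : D → ℤˣ), Function.Injective j ∧
      ∀ x ∈ eCube a D, ∀ x' ∈ eCube a D,
        f x - f x' = ∑ k, Pi.single (j k) (s k * (x k - x' k)) := by
  let v : Finset D → Fin n → ℤ := fun T ↦ cubeVertex a (T.map (.subtype _))
  have hv_mem (T : Finset D) : v T ∈ eCube a D :=
    cubeVertex_mem_eCube.2 (Finset.map_subtype_subset T)
  have hcube : IsUnitStepHypercube (f ∘ v) := by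
    refine ⟨fun S T h ↦ Finset.map_injective _ (cubeVertex_injective a
      (hinj (hv_mem S) (hv_mem T) h)), fun T k hk ↦ hf.isUnitStep_sub hinj (hv_mem T) (hv_mem _) ?_⟩
    refine c1Adj_iff_isUnitStep_sub.2 ⟨k, 1, ?_⟩
    simp only [v, Finset.map_insert]
    exact cubeVertex_insert_sub (by simpa using hk)
  obtain ⟨j, s, hj, hF⟩ := hcube.exists_eq_add_sum_single
  have hf_eq (x) (hx : x ∈ eCube a D) :
      f x = f (v ∅) + ∑ k, Pi.single (j k) (s k * (x k - a k)) := by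
    obtain ⟨T, hT, rfl⟩ := mem_eCube_iff_exists_cubeVertex.1 hx
    obtain ⟨S, rfl⟩ : ∃ S : Finset D, S.map (.subtype _) = T :=
      ⟨T.subtype (· ∈ D), Finset.subtype_map_of_mem hT⟩
    refine (hF S).trans (congrArg _ ?_)
    simp [cubeVertex, apply_ite (Pi.single _), -Finset.univ_eq_attach]
  refine ⟨j, s, hj, fun x hx x' hx' ↦ ?_⟩
  rw [hf_eq x hx, hf_eq x' hx', add_sub_add_left_eq_sub, ← Finset.sum_sub_distrib]
  refine Finset.sum_congr rfl fun k _ ↦ ?_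
  rw [← Pi.single_sub, ← mul_sub, sub_sub_sub_cancel_right]

theorem sub_apply_of_sub_eq_sum_single {j : D → Fin m} {s : D → ℤˣ} (hj : Function.Injective j)
    {x x' : Fin n → ℤ} (hsub : f x - f x' = ∑ k, Pi.single (j k) (s k * (x k - x' k))) (k : D) :
    f x (j k) - f x' (j k) = s k * (x k - x' k) := by
  rw [← Pi.sub_apply, hsub, Finset.sum_apply]
  simp [Pi.single_apply, hj.eq_iff]

theorem apply_eq_of_sub_eq_sum_single {j : D → Fin m} {s : D → ℤˣ} {x x' : Fin n → ℤ}
    (hsub : f x - f x' = ∑ k, Pi.single (j k) (s k * (x k - x' k))) {l : Fin m}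
    (hl : l ∉ Finset.univ.image j) : f x l = f x' l := by
  rw [← sub_eq_zero, ← Pi.sub_apply, hsub, Finset.sum_apply]
  refine Finset.sum_eq_zero fun k _ ↦ Pi.single_eq_of_ne ?_ _
  rintro rfl
  exact hl (Finset.mem_image_of_mem j (Finset.mem_univ k))

theorem exists_image_eq_eCube (hinj : Set.InjOn f (eCube a D)) {j : D → Fin m} {s : D → ℤˣ}
    (hj : Function.Injective j)
    (hsub : ∀ x ∈ eCube a D, ∀ x' ∈ eCube a D,
      f x - f x' = ∑ k, Pi.single (j k) (s k * (x k - x' k))) :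
    ∃ b, (eCube a D).image f = eCube b (Finset.univ.image j) := by
  -- The minimal corner of the image is the image of the vertex that is extremal in exactly the
  -- directions reversed by `f`.
  let c := cubeVertex a (({k | s k = -1} : Finset D).map (.subtype _))
  have hc : c ∈ eCube a D := cubeVertex_mem_eCube.2 (Finset.map_subtype_subset _)
  have hc_apply (k : D) : s k = 1 ∧ c k = a k ∨ s k = -1 ∧ c k = a k + 1 := by
    rcases Int.units_eq_one_or (s k) with hs | hs <;> simp [c, cubeVertex, hs]
  have hsubset : (eCube a D).image f ⊆ eCube (f c) (Finset.univ.image j) := by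
    refine Finset.image_subset_iff.2 fun x hx ↦ mem_eCube.2 fun l ↦ ?_
    by_cases hl : l ∈ Finset.univ.image j
    · obtain ⟨k, -, rfl⟩ := Finset.mem_image.1 hl
      have hfk := sub_apply_of_sub_eq_sum_single hj (hsub x hx c hc) k
      have hxk : x k = a k ∨ x k = a k + 1 := (mem_eCube.1 hx k).imp_right And.right
      rw [and_iff_right hl]
      rcases hc_apply k with ⟨hs, hck⟩ | ⟨hs, hck⟩
      · rw [hs, hck, Units.val_one, one_mul] at hfk
        lia
      · rw [hs, hck, Units.val_neg, Units.val_one, neg_one_mul] at hfk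
        lia
    · exact .inl (apply_eq_of_sub_eq_sum_single (hsub x hx c hc) hl)
  refine ⟨f c, Finset.eq_of_subset_of_card_le hsubset ?_⟩
  rw [Finset.card_image_of_injOn hinj, card_eCube, card_eCube,
    Finset.card_image_of_injective _ hj, Finset.card_univ, Fintype.card_coe]

theorem exists_isSignedPermOn (hf : c1Cont (eCube a D) f) (hinj : Set.InjOn f (eCube a D)) :
    ∃ (b : Fin m → ℤ) (E : Finset (Fin m)) (e : D ≃ E) (s : D → ℤˣ),
      IsSignedPermOn f a D b E e s := by
  obtain ⟨j, s, hj, hsub⟩ := exists_sub_eq_sum_single hf hinj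
  obtain ⟨b, himage⟩ := exists_image_eq_eCube hinj hj hsub
  let e : D ≃ Finset.univ.image j :=
    (Equiv.ofInjective j hj).trans (Equiv.subtypeEquivRight fun l ↦ by simp)
  exact ⟨b, _, e, s, himage, fun x hx x' hx' ↦ sub_apply_of_sub_eq_sum_single hj (hsub x hx x' hx')⟩

end InjectiveOnCube

section Sign

variable {n m : ℕ} {f : (Fin n → ℤ) → (Fin m → ℤ)} {g : (Fin m → ℤ) → (Fin n → ℤ)}
  {a : Fin n → ℤ} {D : Finset (Fin n)} {b : Fin m → ℤ} {E : Finset (Fin m)}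

theorem IsSignedPermOn.comp {p : ℕ} {h : (Fin m → ℤ) → (Fin p → ℤ)} {c : Fin p → ℤ}
    {G : Finset (Fin p)} {e : D ≃ E} {e' : E ≃ G} {s : D → ℤˣ} {t : E → ℤˣ}
    (hh : IsSignedPermOn h b E c G e' t) (hf : IsSignedPermOn f a D b E e s) :
    IsSignedPermOn (h ∘ f) a D c G (e.trans e') (fun k ↦ t (e k) * s k) where
  image_eq := by rw [← Finset.image_image, hf.image_eq, hh.image_eq]
  sub_apply x hx x' hx' k := by
    have hmem {x} (hx : x ∈ eCube a D) : f x ∈ eCube b E :=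
      hf.image_eq ▸ Finset.mem_image_of_mem f hx
    rw [Function.comp_apply, Function.comp_apply, Equiv.trans_apply,
      hh.sub_apply _ (hmem hx) _ (hmem hx'), hf.sub_apply x hx x' hx', Units.val_mul, mul_assoc]

theorem IsSignedPermOn.cubeSign_eq {f : (Fin n → ℤ) → (Fin n → ℤ)} {e : Equiv.Perm D}
    {s : D → ℤˣ} (hf : IsSignedPermOn f a D a D e s) :
    cubeSign f a D = ↑(Equiv.Perm.sign e * ∏ k, s k) := by
  have hself := self_mem_eCube a D
  have hex : ∃ p : Equiv.Perm D × (D → ℤ), (∀ i, p.2 i = 1 ∨ p.2 i = -1) ∧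
      ∀ x ∈ eCube a D, ∀ i : D, f x i = f a i + p.2 i * (x (p.1 i) - a (p.1 i)) := by
    refine ⟨(e.symm, fun i ↦ s (e.symm i)), fun i ↦ Int.isUnit_iff.1 (s _).isUnit, fun x hx i ↦ ?_⟩
    rw [← hf.sub_apply x hx a hself, e.apply_symm_apply, add_sub_cancel]
  have huniq (k : D) : e.symm k = hex.choose.1 k ∧ (s (e.symm k) : ℤ) = hex.choose.2 k := by
    have h := eq_of_forall_mul_sub_eq (k := (hex.choose.1 k : Fin n)) (e.symm k).2
      (s (e.symm k)).ne_zero fun x hx ↦ by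
        rw [← hf.sub_apply x hx a hself, e.apply_symm_apply, hex.choose_spec.2 x hx k,
          add_sub_cancel_left]
    exact ⟨Subtype.ext h.1, h.2⟩
  rw [cubeSign, dif_pos hex, ← Equiv.ext fun k ↦ (huniq k).1, Equiv.Perm.sign_symm]
  simp only [← (huniq _).2]
  rw [Equiv.prod_comp e.symm fun k ↦ (s k : ℤ), Units.val_mul, Units.coe_prod]

theorem IsSignedPermOn.cubeSign_comp_comm {e : D ≃ E} {e' : E ≃ D} {s : D → ℤˣ} {t : E → ℤˣ}
    (hf : IsSignedPermOn f a D b E e s) (hg : IsSignedPermOn g b E a D e' t) :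
    cubeSign (f ∘ g) b E = cubeSign (g ∘ f) a D := by
  have hsign : Equiv.Perm.sign (e'.trans e) = Equiv.Perm.sign (e.trans e') :=
    Equiv.Perm.sign_eq_sign_of_equiv _ _ e' fun _ ↦ rfl
  rw [(hf.comp hg).cubeSign_eq, (hg.comp hf).cubeSign_eq, hsign, Finset.prod_mul_distrib,
    Finset.prod_mul_distrib, Equiv.prod_comp e t, Equiv.prod_comp e' s, mul_comm (∏ k, s k)]

end Sign

theorem injOn_of_image_comp_eq {α β : Type*} [DecidableEq α] {u : α → β} {w : β → α}
    {S : Finset α} (h : S.image (w ∘ u) = S) : Set.InjOn u S :=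
  Set.InjOn.of_comp (Finset.card_image_iff.1 (congrArg Finset.card h))

section Lefschetz

variable {n m : ℕ} {X : Finset (Fin n → ℤ)} {Y : Finset (Fin m → ℤ)}
  {f : (Fin n → ℤ) → (Fin m → ℤ)} {g : (Fin m → ℤ) → (Fin n → ℤ)}

/-- The elementary cubes `σ ⊆ X` with `h(σ) = σ`, encoded by their minimal corner and their set of
nondegenerate directions. -/
def fixedCubes (X : Finset (Fin n → ℤ)) (h : (Fin n → ℤ) → (Fin n → ℤ)) :
    Finset ((Fin n → ℤ) × Finset (Fin n)) :=
  {p ∈ X ×ˢ Finset.univ | eCube p.1 p.2 ⊆ X ∧ (eCube p.1 p.2).image h = eCube p.1 p.2}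

theorem mem_fixedCubes {h : (Fin n → ℤ) → (Fin n → ℤ)} {p : (Fin n → ℤ) × Finset (Fin n)} :
    p ∈ fixedCubes X h ↔ eCube p.1 p.2 ⊆ X ∧ (eCube p.1 p.2).image h = eCube p.1 p.2 := by
  simp only [fixedCubes, Finset.mem_filter, Finset.mem_product, Finset.mem_univ, and_true,
    and_iff_right_iff_imp]
  exact fun hp ↦ hp.1 (self_mem_eCube p.1 p.2)

theorem cubLef_eq_sum_fixedCubes (X : Finset (Fin n → ℤ)) (h : (Fin n → ℤ) → (Fin n → ℤ)) :
    cubLef X h = ∑ p ∈ fixedCubes X h, (-1 : ℤ) ^ p.2.card * cubeSign h p.1 p.2 := by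
  rw [fixedCubes, Finset.sum_filter, Finset.sum_product, cubLef]

theorem exists_image_mem_fixedCubes (hfXY : MapsInto X Y f) (hf : c1Cont X f) (hg : c1Cont Y g)
    {p : (Fin n → ℤ) × Finset (Fin n)} (hp : p ∈ fixedCubes X (g ∘ f)) :
    ∃ q ∈ fixedCubes Y (f ∘ g), (eCube p.1 p.2).image f = eCube q.1 q.2 ∧
      q.2.card = p.2.card ∧ cubeSign (f ∘ g) q.1 q.2 = cubeSign (g ∘ f) p.1 p.2 := by
  obtain ⟨a, D⟩ := p
  obtain ⟨hX, hfix⟩ := mem_fixedCubes.1 hp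
  obtain ⟨b, E, e, s, hfe⟩ := exists_isSignedPermOn (hf.mono hX) (injOn_of_image_comp_eq hfix)
  have hY : eCube b E ⊆ Y := by
    rw [← hfe.image_eq]
    exact Finset.image_subset_iff.2 fun x hx ↦ hfXY x (hX hx)
  have hgim : (eCube b E).image g = eCube a D := by rw [← hfe.image_eq, Finset.image_image, hfix]
  have hfix' : (eCube b E).image (f ∘ g) = eCube b E := by
    rw [← Finset.image_image, hgim, hfe.image_eq]
  obtain ⟨a', D', e', t, hge⟩ := exists_isSignedPermOn (hg.mono hY) (injOn_of_image_comp_eq hfix')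
  obtain ⟨rfl, rfl⟩ := eCube_injective2 (hge.image_eq.symm.trans hgim)
  exact ⟨(b, E), mem_fixedCubes.2 ⟨hY, hfix'⟩, hfe.image_eq, Finset.card_eq_of_equiv e',
    hfe.cubeSign_comp_comm hge⟩

end Lefschetz

theorem cubLef_comp_comm_general {n m : ℕ} (X : Finset (Fin n → ℤ)) (Y : Finset (Fin m → ℤ))
    (f : (Fin n → ℤ) → (Fin m → ℤ)) (g : (Fin m → ℤ) → (Fin n → ℤ))
    (hfXY : MapsInto X Y f) (hgYX : MapsInto Y X g)
    (hf : c1Cont X f) (hg : c1Cont Y g) :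
    cubLef Y (f ∘ g) = cubLef X (g ∘ f) := by
  choose! φ hφ_mem hφ_image hφ_card hφ_sign using
    fun p ↦ exists_image_mem_fixedCubes (p := p) hfXY hf hg
  choose! ψ hψ_mem hψ_image _ _ using
    fun q ↦ exists_image_mem_fixedCubes (p := q) hgYX hg hf
  have hψφ (p) (hp : p ∈ fixedCubes X (g ∘ f)) : ψ (φ p) = p := by
    refine Prod.ext_iff.2 (eCube_injective2 ?_)
    rw [← hψ_image _ (hφ_mem p hp), ← hφ_image p hp, Finset.image_image, (mem_fixedCubes.1 hp).2]
  have hφψ (q) (hq : q ∈ fixedCubes Y (f ∘ g)) : φ (ψ q) = q := by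
    refine Prod.ext_iff.2 (eCube_injective2 ?_)
    rw [← hφ_image _ (hψ_mem q hq), ← hψ_image q hq, Finset.image_image, (mem_fixedCubes.1 hq).2]
  rw [cubLef_eq_sum_fixedCubes, cubLef_eq_sum_fixedCubes]
  refine (Finset.sum_nbij' φ ψ hφ_mem hψ_mem hψφ hφψ fun p hp ↦ ?_).symm
  rw [hφ_card p hp, hφ_sign p hp]

/-- Let `X ⊆ ℤ^n` and `Y ⊆ ℤ^m` be finite digital images with `c1`-adjacency, `n, m ≤ 4`,
and let `f : X → Y` and `g : Y → X` be `c1`-continuous maps.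
Then `L̄(f ∘ g) = L̄(g ∘ f)`. -/
theorem cubLef_comp_comm {n m : ℕ} (hn : n ≤ 4) (hm : m ≤ 4)
    (X : Finset (Fin n → ℤ)) (Y : Finset (Fin m → ℤ))
    (f : (Fin n → ℤ) → (Fin m → ℤ)) (g : (Fin m → ℤ) → (Fin n → ℤ))
    (hfXY : MapsInto X Y f) (hgYX : MapsInto Y X g)
    (hf : c1Cont X f) (hg : c1Cont Y g) :
    cubLef Y (f ∘ g) = cubLef X (g ∘ f) :=
  cubLef_comp_comm_general X Y f g hfXY hgYX hf hg
end

section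
/- Let (X,κ) and (Y,λ) be finite digital images and let f : X → Y and g : Y → X be continuous maps. Then L(f ∘ g) = L(g ∘ f), where f ∘ g : Y → Y and g ∘ f : X → X. -/
/-- A function `f : (X,κ) → (Y,λ)` between digital images is (digitally) continuous if
whenever `x, y` are `κ`-adjacent, `f x = f y` or `f x, f y` are `λ`-adjacent. -/
def DigCont {X Y : Type*} (κ : X → X → Prop) (lam : Y → Y → Prop) (f : X → Y) : Prop :=
  ∀ x y, κ x y → f x = f y ∨ lam (f x) (f y)

/-- A clique of `(X,κ)`: a nonempty set of mutually `κ`-adjacent points. -/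
def IsClique {X : Type*} (κ : X → X → Prop) (S : Finset X) : Prop :=
  S.Nonempty ∧ ∀ x ∈ S, ∀ y ∈ S, x ≠ y → κ x y

/-- `x` is an approximate fixed point of `f`: `f x = x` or `f x` is adjacent to `x`. -/
def ApproxFix {X : Type*} (κ : X → X → Prop) (f : X → X) (x : X) : Prop :=
  f x = x ∨ κ x (f x)

/-- A strong homotopy between `f, g : (X,κ) → (Y,λ)` is `H : X × {0,…,m} → Y` with
`H(x,0) = f(x)`, `H(x,m) = g(x)`, such that whenever (`x = x′` or `x,x′` are `κ`-adjacent)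
and `|t − t′| ≤ 1`, with `(x,t) ≠ (x′,t′)`, the values `H(x,t), H(x′,t′)` are equal or
`λ`-adjacent.  `f ≃* g` iff such an `H` exists. -/
def StrongHomotopic {X Y : Type*} (κ : X → X → Prop) (lam : Y → Y → Prop)
    (f g : X → Y) : Prop :=
  ∃ (m : ℕ) (H : X → ℕ → Y),
    (∀ x, H x 0 = f x) ∧ (∀ x, H x m = g x) ∧
    ∀ x x' (t t' : ℕ), t ≤ m → t' ≤ m → (x = x' ∨ κ x x') →
      (t = t' ∨ t + 1 = t' ∨ t' + 1 = t) → (x ≠ x' ∨ t ≠ t') →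
      (H x t = H x' t' ∨ lam (H x t) (H x' t'))

/-- The permutation induced by `f` on a finite set `S` with `f(S) = S`. -/
noncomputable def fixedSetPerm {X : Type*} [DecidableEq X] (f : X → X) (S : Finset X)
    (h : S.image f = S) : Equiv.Perm {x // x ∈ S} :=
  Equiv.ofBijective
    (fun x => ⟨f x.1, by
      have hx : f x.1 ∈ S.image f := Finset.mem_image_of_mem f x.2
      rwa [h] at hx⟩)
    (by
      rw [Fintype.bijective_iff_surjective_and_card]
      refine ⟨fun y => ?_, rfl⟩
      have hy : (y : X) ∈ S.image f := by rw [h]; exact y.2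
      obtain ⟨x, hx, hfx⟩ := Finset.mem_image.mp hy
      exact ⟨⟨x, hx⟩, Subtype.ext hfx⟩)

open Classical in
/-- The simplicial Lefschetz number `L(f) = ∑_S (−1)^{|S|−1} sgn(f|_S)`, summing over all
cliques `S` of `(X,κ)` with `f(S) = S`. -/
noncomputable def simpLef {X : Type*} [Fintype X] [DecidableEq X]
    (κ : X → X → Prop) (f : X → X) : ℤ :=
  ∑ S : Finset X,
    if h : IsClique κ S ∧ S.image f = S then
      (-1 : ℤ) ^ (S.card - 1) * ((Equiv.Perm.sign (fixedSetPerm f S h.2) : ℤˣ) : ℤ)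
    else 0

open Classical in
/-- The simplicial Euler characteristic `χ(X) = ∑_{q≥0} (−1)^q s_q`, where `s_q` is the
number of cliques of `X` with exactly `q+1` points; equivalently `∑_S (−1)^{|S|−1}` over
all cliques `S`. -/
noncomputable def simpEuler {X : Type*} [Fintype X] (κ : X → X → Prop) : ℤ :=
  ∑ S : Finset X, if IsClique κ S then (-1 : ℤ) ^ (S.card - 1) else 0

/-!
Taking images under `f` and under `g` gives mutually inverse bijections between the
`g ∘ f`-invariant cliques of `X` and the `f ∘ g`-invariant cliques of `Y`. On an invariant
clique `S`, `f` is injective and conjugates `(g ∘ f)|_S` to `(f ∘ g)|_{f(S)}`, so corresponding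
cliques have the same cardinality and sign, and the two sums agree term by term.
-/

/-- A map sending cliques to cliques, that is, a simplicial map between clique complexes. The
Lefschetz number sees a digital image only through its clique complex. -/
def CliquePreserving {X Y : Type*} [DecidableEq Y] (κ : X → X → Prop) (lam : Y → Y → Prop)
    (f : X → Y) : Prop :=
  ∀ S, IsClique κ S → IsClique lam (S.image f)

theorem DigCont.cliquePreserving {X Y : Type*} [DecidableEq Y] {κ : X → X → Prop}
    {lam : Y → Y → Prop} {f : X → Y} (hf : DigCont κ lam f) : CliquePreserving κ lam f := by
  rintro S ⟨hne, hadj⟩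
  refine ⟨hne.image f, ?_⟩
  simp only [Finset.forall_mem_image]
  intro x hx y hy hxy
  exact (hf x y (hadj x hx y hy (ne_of_apply_ne f hxy))).resolve_left hxy

theorem sign_fixedSetPerm_eq_of_bijOn {X Y : Type*} [DecidableEq X] [DecidableEq Y]
    {p : X → X} {q : Y → Y} {φ : X → Y} (hφ : Function.Semiconj φ p q)
    {S : Finset X} {T : Finset Y} (hS : S.image p = S) (hT : T.image q = T)
    (hST : Set.BijOn φ S T) :
    Equiv.Perm.sign (fixedSetPerm p S hS) = Equiv.Perm.sign (fixedSetPerm q T hT) :=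
  Equiv.Perm.sign_eq_sign_of_equiv _ _ (hST.equiv φ) fun x => Subtype.ext (hφ x)

theorem sum_dite_zero_eq_sum_subtype {ι M : Type*} [Fintype ι] [AddCommMonoid M] (p : ι → Prop)
    [DecidablePred p] (F : ∀ i, p i → M) :
    ∑ i, (if h : p i then F i h else 0) = ∑ i : {i // p i}, F i i.2 :=
  calc ∑ i, (if h : p i then F i h else 0)
    _ = ∑ i with p i, (if h : p i then F i h else 0) :=
      (Finset.sum_filter_of_ne fun _ _ => Not.imp_symm fun h => dif_neg h).symm
    _ = ∑ i : {i // p i}, (if h : p i then F i h else 0) :=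
      Finset.sum_subtype _ Finset.mem_filter_univ _
    _ = ∑ i : {i // p i}, F i i.2 :=
      Finset.sum_congr rfl fun i _ => dif_pos i.2

/-- The cliques `S` of `(X,κ)` with `f(S) = S`, which index the nonzero terms of `simpLef κ f`. -/
abbrev InvariantClique {X : Type*} [DecidableEq X] (κ : X → X → Prop) (f : X → X) : Type _ :=
  {S : Finset X // IsClique κ S ∧ S.image f = S}

namespace InvariantClique

/-- The contribution `(−1)^{|S|−1} sgn(f|_S)` of an invariant clique `S` to the simplicial
Lefschetz number of `f`. -/
noncomputable def weight {X : Type*} [DecidableEq X] {κ : X → X → Prop} {f : X → X}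
    (S : InvariantClique κ f) : ℤ :=
  (-1) ^ (S.1.card - 1) * Equiv.Perm.sign (fixedSetPerm f S.1 S.2.2)

variable {X Y : Type*} [DecidableEq X] [DecidableEq Y] {κ : X → X → Prop} {lam : Y → Y → Prop}
  {f : X → Y} {g : Y → X}

/-- The image under `f` of a `g ∘ f`-invariant clique, as an `f ∘ g`-invariant clique. -/
def image (hf : CliquePreserving κ lam f) (S : InvariantClique κ (g ∘ f)) :
    InvariantClique lam (f ∘ g) where
  val := S.1.image f
  property := ⟨hf S.1 S.2.1,
    Function.IsFixedPt.map S.2.2 (Function.Semiconj.finset_image fun _ => rfl)⟩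

/-- The correspondence between `g ∘ f`-invariant cliques and `f ∘ g`-invariant cliques given by
taking images under `f` and `g`. -/
def equivComp (hf : CliquePreserving κ lam f) (hg : CliquePreserving lam κ g) :
    InvariantClique κ (g ∘ f) ≃ InvariantClique lam (f ∘ g) where
  toFun := image hf
  invFun := image hg
  left_inv S := Subtype.ext (Finset.image_image.trans S.2.2)
  right_inv T := Subtype.ext (Finset.image_image.trans T.2.2)

theorem weight_image (hf : CliquePreserving κ lam f) (S : InvariantClique κ (g ∘ f)) :
    (S.image hf).weight = S.weight := by
  have hinj : Set.InjOn f S.1 :=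
    (Finset.injOn_of_card_image_eq (congrArg Finset.card S.2.2)).of_comp
  have hbij : Set.BijOn f S.1 (S.image hf).1 := by
    simpa only [image, Finset.coe_image] using hinj.bijOn_image
  have hcard : (S.image hf).1.card = S.1.card := Finset.card_image_of_injOn hinj
  have hconj : Function.Semiconj f (g ∘ f) (f ∘ g) := fun _ => rfl
  have hsign : Equiv.Perm.sign (fixedSetPerm (g ∘ f) S.1 S.2.2) =
      Equiv.Perm.sign (fixedSetPerm (f ∘ g) (S.image hf).1 (S.image hf).2.2) :=
    sign_fixedSetPerm_eq_of_bijOn hconj S.2.2 (S.image hf).2.2 hbij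
  rw [weight, weight, hcard, hsign]

end InvariantClique

open Classical in
theorem simpLef_eq_sum_weight {X : Type*} [Fintype X] [DecidableEq X]
    (κ : X → X → Prop) (f : X → X) :
    simpLef κ f = ∑ S : InvariantClique κ f, S.weight :=
  sum_dite_zero_eq_sum_subtype _ _

open Classical in
theorem simpLef_comp_comm_general {X Y : Type*} [Fintype X] [DecidableEq X]
    [Fintype Y] [DecidableEq Y] (κ : X → X → Prop) (lam : Y → Y → Prop) (f : X → Y) (g : Y → X)
    (hf : CliquePreserving κ lam f) (hg : CliquePreserving lam κ g) :
    simpLef lam (f ∘ g) = simpLef κ (g ∘ f) :=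
  calc simpLef lam (f ∘ g)
    _ = ∑ T : InvariantClique lam (f ∘ g), T.weight := simpLef_eq_sum_weight _ _
    _ = ∑ S : InvariantClique κ (g ∘ f), (S.image hf).weight :=
      ((InvariantClique.equivComp hf hg).sum_comp InvariantClique.weight).symm
    _ = ∑ S : InvariantClique κ (g ∘ f), S.weight :=
      Finset.sum_congr rfl fun S _ => S.weight_image hf
    _ = simpLef κ (g ∘ f) := (simpLef_eq_sum_weight _ _).symm

/-- Let `(X,κ)` and `(Y,λ)` be finite digital images and `f : X → Y`, `g : Y → X`
continuous maps. Then `L(f ∘ g) = L(g ∘ f)`. -/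
theorem simpLef_comp_comm {X Y : Type*} [Fintype X] [DecidableEq X]
    [Fintype Y] [DecidableEq Y]
    (κ : X → X → Prop) (hκsym : Symmetric κ) (hκirr : Irreflexive κ)
    (lam : Y → Y → Prop) (hlamsym : Symmetric lam) (hlamirr : Irreflexive lam)
    (f : X → Y) (g : Y → X) (hf : DigCont κ lam f) (hg : DigCont lam κ g) :
    simpLef lam (f ∘ g) = simpLef κ (g ∘ f) :=
  simpLef_comp_comm_general κ lam f g hf.cliquePreserving hg.cliquePreserving
end

section
/- Let (X,κ) and (Y,λ) be finite digital images, let f : X → X be a continuous self-map, and let g : X → Y be a strong homotopy equivalence with strong homotopy inverse h : Y → X (i.e., g, h are continuous with h ∘ g ≃* id_X and g ∘ h ≃* id_Y). Then L(f) = L(g ∘ f ∘ h). -/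
/-!
Let `F` be the linear extension of `f` to the free module on `X`. Inside its exterior algebra, the
monomials of the cliques, including the empty one, span the augmented chains of the clique complex.
The principal minor of `-F` at `S` is `(-1) ^ |S|` times the sign of `f` on `S` when `f(S) = S`,
and vanishes otherwise; hence `1 - L(f)` is the trace of `⋀(-F)` on this span. Since
`tr (A B) = tr (B A)`, this gives `L(q ∘ p) = L(p ∘ q)` for continuous `p : X → Y` and `q : Y → X`,
so `L(g ∘ f ∘ h)` equals `L(f ∘ h ∘ g)`, and it remains to see that `L` is invariant under strong
homotopy.

Consecutive stages of a strong homotopy can be joined by moving one point at a time. If only the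
value at `x₀` moves, from `a` to `b`, then `F` changes by the rank one map `δ_{x₀} ⊗ (b - a)`, and
`⋀(-F)` changes by the commutator of the boundary operator, which is contraction with the
augmentation, and the operator `b ∧ a ∧ ⋀(-F)(δ_{x₀} ⌋ ·)`. The latter preserves the clique chains
because `f(S) ∪ {a, b}` is a clique for every clique `S` containing `x₀`; the trace of a commutator
is zero.
-/

open Module ExteriorAlgebra
open CliffordAlgebra (contractLeft contractLeft_ι_mul)

section ExteriorAlgebra

variable {R M N : Type*} [CommRing R] [AddCommGroup M] [Module R M] [AddCommGroup N] [Module R N]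

theorem contractLeft_map (φ : M →ₗ[R] N) (d : Dual R N) (x : ExteriorAlgebra R M) :
    contractLeft d (map φ x) = map φ (contractLeft (d ∘ₗ φ) x) := by
  induction x using CliffordAlgebra.left_induction with
  | algebraMap r => simp
  | add x y hx hy => simp only [map_add, hx, hy]
  | ι_mul x m hx =>
    simp only [map_mul, map_apply_ι, contractLeft_ι_mul, map_sub, map_smul, hx,
      LinearMap.comp_apply]

theorem map_add_smulRight (φ : M →ₗ[R] N) (d : Dual R M) (v : N) (x : ExteriorAlgebra R M) :
    map (φ + d.smulRight v) x = map φ x + ι R v * map φ (contractLeft d x) := by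
  induction x using CliffordAlgebra.left_induction with
  | algebraMap r => simp
  | add x y hx hy => simp only [map_add, mul_add, hx, hy]; abel
  | ι_mul x m hx =>
    have hvv : ι R v * (ι R v * map φ (contractLeft d x)) = 0 := by
      rw [← mul_assoc, ι_sq_zero, zero_mul]
    have hvm : ι R (φ m) * (ι R v * map φ (contractLeft d x)) =
        -(ι R v * (ι R (φ m) * map φ (contractLeft d x))) := by
      rw [← mul_assoc, ← mul_assoc, ← neg_mul, eq_neg_of_add_eq_zero_left (ι_add_mul_swap (φ m) v)]
    simp only [contractLeft_ι_mul, map_mul, map_apply_ι, LinearMap.add_apply,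
      LinearMap.smulRight_apply, map_add, map_smul, map_sub, hx, add_mul, mul_add, mul_sub,
      smul_mul_assoc, mul_smul_comm, hvv, hvm, smul_zero]
    abel

/-- The homotopy operator between the maps that `-φ` and `-(φ + d.smulRight (v - u))` induce on
exterior algebras: it replaces the factor seen by `d` with `v ∧ u` and applies `-φ` to the
others. -/
noncomputable def rankOneHomotopy (φ : M →ₗ[R] M) (d : Dual R M) (u v : M) :
    ExteriorAlgebra R M →ₗ[R] ExteriorAlgebra R M :=
  LinearMap.mulLeft R (ι R v * ι R u) ∘ₗ (map (-φ)).toLinearMap ∘ₗ contractLeft d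

theorem rankOneHomotopy_apply (φ : M →ₗ[R] M) (d : Dual R M) (u v : M) (x : ExteriorAlgebra R M) :
    rankOneHomotopy φ d u v x = ι R v * (ι R u * map (-φ) (contractLeft d x)) := by
  simp [rankOneHomotopy]

/- The minus signs make the difference a commutator rather than an anticommutator, so that its
trace vanishes. -/
theorem map_neg_add_smulRight_sub (φ : M →ₗ[R] M) (d ε : Dual R M) (u v : M)
    (hφ : ε ∘ₗ φ = ε) (hu : ε u = 1) (hv : ε v = 1) (x : ExteriorAlgebra R M) :
    map (-(φ + d.smulRight (v - u))) x - map (-φ) x =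
      contractLeft ε (rankOneHomotopy φ d u v x) - rankOneHomotopy φ d u v (contractLeft ε x) := by
  have hneg : -(φ + d.smulRight (v - u)) = -φ + d.smulRight (u - v) := by
    ext m
    simp only [LinearMap.neg_apply, LinearMap.add_apply, LinearMap.smulRight_apply, smul_sub]
    abel
  have hcomm : contractLeft ε (map (-φ) (contractLeft d x)) =
      map (-φ) (contractLeft d (contractLeft ε x)) := by
    rw [contractLeft_map, LinearMap.comp_neg, hφ, map_neg, LinearMap.neg_apply,
      CliffordAlgebra.contractLeft_comm, neg_neg]
  simp only [hneg, map_add_smulRight, rankOneHomotopy_apply, contractLeft_ι_mul, hu, hv, hcomm,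
    one_smul, map_sub, sub_mul, mul_sub]
  abel

/-- The exterior algebra of a submodule, as a subalgebra of the exterior algebra of the ambient
module. -/
def exteriorSubalgebra (P : Submodule R M) : Subalgebra R (ExteriorAlgebra R M) :=
  (map P.subtype).range

theorem map_mem_exteriorSubalgebra {P : Submodule R M} {Q : Submodule R N} {φ : M →ₗ[R] N}
    (hφ : P ≤ Q.comap φ) {x : ExteriorAlgebra R M} (hx : x ∈ exteriorSubalgebra P) :
    map φ x ∈ exteriorSubalgebra Q := by
  obtain ⟨x, rfl⟩ := hx
  refine ⟨map (φ.restrict hφ) x, ?_⟩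
  change (map Q.subtype).comp (map (φ.restrict hφ)) x = (map φ).comp (map P.subtype) x
  rw [map_comp_map, map_comp_map]
  rfl

theorem exteriorSubalgebra_mono {P Q : Submodule R M} (hPQ : P ≤ Q) :
    exteriorSubalgebra P ≤ exteriorSubalgebra Q := fun x hx ↦ by
  simpa using map_mem_exteriorSubalgebra (φ := LinearMap.id) hPQ hx

theorem ι_mem_exteriorSubalgebra {P : Submodule R M} {m : M} (hm : m ∈ P) :
    ι R m ∈ exteriorSubalgebra P :=
  ⟨ι R ⟨m, hm⟩, map_apply_ι _ _⟩

theorem contractLeft_mem_exteriorSubalgebra {P : Submodule R M} (d : Dual R M)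
    {x : ExteriorAlgebra R M} (hx : x ∈ exteriorSubalgebra P) :
    contractLeft d x ∈ exteriorSubalgebra P := by
  obtain ⟨x, rfl⟩ := hx
  exact ⟨_, (contractLeft_map P.subtype d x).symm⟩

theorem contractLeft_eq_zero_of_mem_exteriorSubalgebra {P : Submodule R M} {d : Dual R M}
    (hd : P ≤ LinearMap.ker d) {x : ExteriorAlgebra R M} (hx : x ∈ exteriorSubalgebra P) :
    contractLeft d x = 0 := by
  obtain ⟨x, rfl⟩ := hx
  have hdP : d ∘ₗ P.subtype = 0 := LinearMap.ext fun m ↦ hd m.2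
  change contractLeft d (map P.subtype x) = 0
  rw [contractLeft_map, hdP, map_zero, LinearMap.zero_apply, map_zero]

end ExteriorAlgebra

section Basis

variable {R M I : Type*} [CommRing R] [AddCommGroup M] [Module R M]

/-- The basis of a submodule spanned by some of the vectors of a basis. -/
noncomputable def spanImageBasis (b : Basis I R M) (s : Set I) {W : Submodule R M}
    (hW : W = Submodule.span R (b '' s)) : Basis s R W :=
  (Basis.span (b.linearIndependent.comp ((↑) : s → I) Subtype.val_injective)).map
    (LinearEquiv.ofEq _ _ (by rw [hW, Set.range_comp, Subtype.range_coe]))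

theorem coe_spanImageBasis (b : Basis I R M) (s : Set I) {W : Submodule R M}
    (hW : W = Submodule.span R (b '' s)) (i : s) : (spanImageBasis b s hW i : M) = b i := by
  simp [spanImageBasis]

theorem spanImageBasis_repr (b : Basis I R M) (s : Set I) {W : Submodule R M}
    (hW : W = Submodule.span R (b '' s)) (x : W) (i : s) :
    (spanImageBasis b s hW).repr x i = b.repr x i := by
  classical
  have : (spanImageBasis b s hW).coord i = b.coord i ∘ₗ W.subtype :=
    (spanImageBasis b s hW).ext fun j ↦ by
      simp [coe_spanImageBasis, Finsupp.single_apply, Subtype.ext_iff]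
  exact LinearMap.congr_fun this x

theorem trace_restrict_of_eq_span_image (b : Basis I R M) (s : Finset I) {W : Submodule R M}
    (hW : W = Submodule.span R (b '' s)) {A : M →ₗ[R] M} (hA : ∀ x ∈ W, A x ∈ W) :
    LinearMap.trace R W (A.restrict hA) = ∑ i ∈ s, b.repr (A (b i)) i := by
  classical
  rw [LinearMap.trace_eq_matrix_trace R (spanImageBasis b s hW), Matrix.trace, ← s.sum_coe_sort]
  refine Finset.sum_congr rfl fun i _ ↦ ?_
  rw [Matrix.diag_apply, LinearMap.toMatrix_apply, spanImageBasis_repr,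
    LinearMap.coe_restrict_apply, coe_spanImageBasis]

variable {J N : Type*} [AddCommGroup N] [Module R N] [LinearOrder I] [LinearOrder J]

theorem basis_eq_ιMulti (b : Basis I R M) {T : Finset I} {n : ℕ} (hT : T.card = n) :
    b.ExteriorAlgebra T = ιMulti R n (b ∘ T.orderEmbOfFin hT) :=
  basis_apply_ofCard b hT

theorem map_basis_of_orderEmbedding (b : Basis I R M) (c : Basis J R N) (φ : M →ₗ[R] N)
    (e : I ↪o J) (hφ : ∀ i, φ (b i) = c (e i)) (T : Finset I) :
    map φ (b.ExteriorAlgebra T) = c.ExteriorAlgebra (T.map e.toEmbedding) := by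
  have hcard : (T.map e.toEmbedding).card = T.card := T.card_map _
  have hemb : (T.map e.toEmbedding).orderEmbOfFin hcard = (T.orderEmbOfFin rfl).trans e :=
    (Finset.orderEmbOfFin_unique' hcard fun i ↦ by simp).symm
  rw [basis_eq_ιMulti b rfl, basis_eq_ιMulti c hcard, map_apply_ιMulti, hemb]
  congr 1 with i
  simp [hφ]

theorem exteriorSubalgebra_span_image (b : Basis I R M) (s : Set I) :
    (exteriorSubalgebra (Submodule.span R (b '' s))).toSubmodule =
      Submodule.span R (b.ExteriorAlgebra '' {T | (T : Set I) ⊆ s}) := by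
  let c := spanImageBasis b s rfl
  have hmap (T : Finset s) : map (Submodule.span R (b '' s)).subtype (c.ExteriorAlgebra T) =
      b.ExteriorAlgebra (T.map (.subtype (· ∈ s))) :=
    map_basis_of_orderEmbedding c b _ (.subtype (· ∈ s)) (coe_spanImageBasis b s rfl) T
  change (map (Submodule.span R (b '' s)).subtype).toLinearMap.range = _
  rw [LinearMap.range_eq_map, ← c.ExteriorAlgebra.span_eq, Submodule.map_span, ← Set.range_comp]
  congr 1 with x
  constructor
  · rintro ⟨T, rfl⟩
    exact ⟨_, by simp, (hmap T).symm⟩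
  · rintro ⟨T, hT, rfl⟩
    lift T to Finset s using hT
    exact ⟨T, (hmap T).trans (by rw [Finset.map_eq_image]; rfl)⟩

theorem basis_repr_coe_exteriorPower (b : Basis I R M) {n : ℕ} (x : ⋀[R]^n M)
    (T : Set.powersetCard I n) :
    b.ExteriorAlgebra.repr x T = (b.exteriorPower n).repr x T := by
  classical
  have : b.ExteriorAlgebra.coord T ∘ₗ (⋀[R]^n M).subtype = (b.exteriorPower n).coord T :=
    (b.exteriorPower n).ext fun U ↦ by
      rw [LinearMap.comp_apply, Submodule.subtype_apply, ← basis_eq_coe_basis]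
      simp only [Basis.coord_apply, Basis.repr_self, Finsupp.single_apply, Subtype.ext_iff]
  exact LinearMap.congr_fun this x

theorem basis_repr_map_self (b : Basis I R M) (φ : M →ₗ[R] M) (T : Finset I) :
    b.ExteriorAlgebra.repr (map φ (b.ExteriorAlgebra T)) T =
      (Matrix.of fun i j : T ↦ b.repr (φ (b j)) i).det := by
  let e := T.orderIsoOfFin rfl
  have := basis_repr_coe_exteriorPower b
    (exteriorPower.ιMulti R T.card (φ ∘ b ∘ T.orderEmbOfFin rfl)) (Set.powersetCard.ofCard rfl)
  rw [basis_eq_ιMulti b rfl, map_apply_ιMulti]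
  refine this.trans ?_
  rw [exteriorPower.basis_repr_apply, exteriorPower.ιMultiDual_apply_ιMulti,
    ← Matrix.det_transpose, ← Matrix.det_submatrix_equiv_self e.toEquiv]
  rfl

end Basis

section Continuity

variable {X Y Z : Type*} {κ : X → X → Prop} {lam : Y → Y → Prop} {μ : Z → Z → Prop}

theorem DigCont.comp {f : Y → Z} {g : X → Y} (hf : DigCont lam μ f) (hg : DigCont κ lam g) :
    DigCont κ μ (f ∘ g) := fun x y hxy ↦
  (hg x y hxy).elim (fun h ↦ .inl (congrArg f h)) (hf _ _)

theorem DigCont.pairwise_image {f : X → Y} (hf : DigCont κ lam f) {S : Set X}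
    (hS : S.Pairwise κ) : (f '' S).Pairwise lam := by
  rintro _ ⟨x, hx, rfl⟩ _ ⟨y, hy, rfl⟩ hne
  exact (hf x y (hS hx hy (ne_of_apply_ne f hne))).resolve_left hne

/-- Two maps of digital images are contiguous if any value of either at a point is equal or
adjacent to any value of either at an equal or adjacent point; consecutive stages of a strong
homotopy are contiguous. -/
def Contiguous (κ : X → X → Prop) (lam : Y → Y → Prop) (f g : X → Y) : Prop :=
  ∀ x x', x = x' ∨ κ x x' →
    ∀ u ∈ ({f x, g x} : Set Y), ∀ v ∈ ({f x', g x'} : Set Y), u = v ∨ lam u v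

namespace Contiguous

variable {f g f' g' : X → Y}

theorem left (h : Contiguous κ lam f g) : DigCont κ lam f := fun x x' hx ↦
  h x x' (.inr hx) _ (by simp) _ (by simp)

theorem right (h : Contiguous κ lam f g) : DigCont κ lam g := fun x x' hx ↦
  h x x' (.inr hx) _ (by simp) _ (by simp)

theorem mono (h : Contiguous κ lam f g)
    (hsub : ∀ x, ({f' x, g' x} : Set Y) ⊆ {f x, g x}) : Contiguous κ lam f' g' :=
  fun x x' hx u hu v hv ↦ h x x' hx u (hsub x hu) v (hsub x' hv)

theorem pairwise_image_union (h : Contiguous κ lam f g) {S : Set X} (hS : S.Pairwise κ) :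
    (f '' S ∪ g '' S).Pairwise lam := by
  have hval : ∀ u ∈ f '' S ∪ g '' S, ∃ x ∈ S, u ∈ ({f x, g x} : Set Y) := by
    rintro _ (⟨x, hx, rfl⟩ | ⟨x, hx, rfl⟩) <;> exact ⟨x, hx, by simp⟩
  intro u hu v hv hne
  obtain ⟨x, hx, hux⟩ := hval u hu
  obtain ⟨x', hx', hvx'⟩ := hval v hv
  exact (h x x' (or_iff_not_imp_left.mpr (hS hx hx')) u hux v hvx').resolve_left hne

end Contiguous

theorem StrongHomotopic.reflTransGen_contiguous {f g : X → Y}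
    (h : StrongHomotopic κ lam f g) : Relation.ReflTransGen (Contiguous κ lam) f g := by
  obtain ⟨m, H, hH0, hHm, hH⟩ := h
  obtain rfl : (H · 0) = f := funext hH0
  obtain rfl : (H · m) = g := funext hHm
  have hstep : ∀ t ∈ Set.Ico 0 m, Contiguous κ lam (H · t) (H · (Order.succ t)) := by
    rintro t ⟨-, htm⟩ x x' hx
    rw [Nat.succ_eq_succ]
    have hpair (s s' : ℕ) (hs : s = t ∨ s = t + 1) (hs' : s' = t ∨ s' = t + 1) :
        H x s = H x' s' ∨ lam (H x s) (H x' s') := by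
      by_cases hne : x ≠ x' ∨ s ≠ s'
      · exact hH x x' s s' (by lia) (by lia) hx (by lia) hne
      · obtain ⟨rfl, rfl⟩ : x = x' ∧ s = s' := by simpa using hne
        exact .inl rfl
    rintro u (rfl | rfl) v (rfl | rfl) <;> exact hpair _ _ (by simp) (by simp)
  exact (reflTransGen_of_succ_of_le (fun s t ↦ Contiguous κ lam (H · s) (H · t)) hstep
    m.zero_le).lift _ fun _ _ ↦ id

theorem StrongHomotopic.comp_left {f g : X → Y} {p : Y → Z} (hp : DigCont lam μ p)
    (h : StrongHomotopic κ lam f g) : StrongHomotopic κ μ (p ∘ f) (p ∘ g) := by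
  obtain ⟨m, H, hH0, hHm, hH⟩ := h
  refine ⟨m, fun x t ↦ p (H x t), fun x ↦ congrArg p (hH0 x), fun x ↦ congrArg p (hHm x), ?_⟩
  intro x x' t t' ht ht' hx htt' hne
  exact (hH x x' t t' ht ht' hx htt' hne).elim (fun h ↦ .inl (congrArg p h)) (hp _ _)

end Continuity

section CliqueChains

variable {X Y Z : Type*} {κ : X → X → Prop} {lam : Y → Y → Prop} {μ : Z → Z → Prop}

/-- The augmented simplicial chains of the clique complex of `(X, κ)`, realised inside the exterior
algebra of the free module on `X`: a clique `{x₀, …, x_q}` is the monomial `x₀ ∧ ⋯ ∧ x_q`, and the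
empty clique in degree `-1` is the monomial `1`. -/
noncomputable def cliqueChains (κ : X → X → Prop) : Submodule ℤ (ExteriorAlgebra ℤ (X →₀ ℤ)) :=
  ⨆ (S : Set X) (_ : S.Pairwise κ), (exteriorSubalgebra (Finsupp.supported ℤ ℤ S)).toSubmodule

theorem mem_cliqueChains_of_mem_exteriorSubalgebra {S : Set X} (hS : S.Pairwise κ)
    {x : ExteriorAlgebra ℤ (X →₀ ℤ)} (hx : x ∈ exteriorSubalgebra (Finsupp.supported ℤ ℤ S)) :
    x ∈ cliqueChains κ :=
  le_iSup₂_of_le (f := fun (S : Set X) (_ : S.Pairwise κ) ↦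
    (exteriorSubalgebra (Finsupp.supported ℤ ℤ S)).toSubmodule) S hS le_rfl hx

theorem cliqueChains_eq_span [LinearOrder X] (κ : X → X → Prop) :
    cliqueChains κ = Submodule.span ℤ
      ((Finsupp.basisSingleOne (R := ℤ)).ExteriorAlgebra ''
        {T : Finset X | (T : Set X).Pairwise κ}) := by
  simp only [cliqueChains, Finsupp.supported_eq_span_single, ← Finsupp.coe_basisSingleOne,
    exteriorSubalgebra_span_image, ← Submodule.span_iUnion, ← Set.image_iUnion]
  congr 2 with T
  simp only [Set.mem_iUnion, Set.mem_ofPred_eq, exists_prop]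
  exact ⟨fun ⟨S, hS, hTS⟩ ↦ hS.mono hTS, fun hT ↦ ⟨T, hT, subset_rfl⟩⟩

instance : Module.Free ℤ (cliqueChains κ) :=
  open Classical in
  letI : LinearOrder X := linearOrderOfSTO WellOrderingRel
  .of_basis (spanImageBasis _ _ (cliqueChains_eq_span κ))

instance [Finite X] : Module.Finite ℤ (cliqueChains κ) :=
  open Classical in
  letI : LinearOrder X := linearOrderOfSTO WellOrderingRel
  .of_basis (spanImageBasis _ _ (cliqueChains_eq_span κ))

theorem map_smul_lmapDomain_mem_exteriorSubalgebra {R : Type*} [CommRing R] (c : R) (f : X → Y)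
    {S : Set X} {x : ExteriorAlgebra R (X →₀ R)}
    (hx : x ∈ exteriorSubalgebra (Finsupp.supported R R S)) :
    map (c • Finsupp.lmapDomain R R f) x ∈ exteriorSubalgebra (Finsupp.supported R R (f '' S)) := by
  refine map_mem_exteriorSubalgebra (fun m hm ↦ ?_) hx
  rw [Submodule.mem_comap, LinearMap.smul_apply, ← Finsupp.lmapDomain_supported]
  exact Submodule.smul_mem _ c (Submodule.mem_map_of_mem hm)

theorem DigCont.map_smul_lmapDomain_mem_cliqueChains {f : X → Y} (hf : DigCont κ lam f) (c : ℤ) :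
    ∀ x ∈ cliqueChains κ, (map (c • Finsupp.lmapDomain ℤ ℤ f)).toLinearMap x ∈ cliqueChains lam :=
  iSup₂_le (a := (cliqueChains lam).comap (map (c • Finsupp.lmapDomain ℤ ℤ f)).toLinearMap)
    fun _ hS _ hx ↦ mem_cliqueChains_of_mem_exteriorSubalgebra (hf.pairwise_image hS)
      (map_smul_lmapDomain_mem_exteriorSubalgebra c f hx)

/-- The map on clique chains induced by a continuous map, multiplied by `c ^ n` on cliques with `n`
points. For `c = -1` its trace is the alternating sum of the traces in each degree. -/
noncomputable def cliqueChainMap (c : ℤ) {f : X → Y} (hf : DigCont κ lam f) :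
    cliqueChains κ →ₗ[ℤ] cliqueChains lam :=
  (map (c • Finsupp.lmapDomain ℤ ℤ f)).toLinearMap.restrict
    (hf.map_smul_lmapDomain_mem_cliqueChains c)

theorem cliqueChainMap_comp (c c' : ℤ) {f : Y → Z} {g : X → Y} (hf : DigCont lam μ f)
    (hg : DigCont κ lam g) :
    cliqueChainMap c hf ∘ₗ cliqueChainMap c' hg = cliqueChainMap (c * c') (hf.comp hg) := by
  have : (map (c • Finsupp.lmapDomain ℤ ℤ f)).comp (map (c' • Finsupp.lmapDomain ℤ ℤ g)) =
      map ((c * c') • Finsupp.lmapDomain ℤ ℤ (f ∘ g)) := by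
    rw [map_comp_map, Finsupp.lmapDomain_comp, LinearMap.smul_comp, LinearMap.comp_smul, smul_smul]
  exact LinearMap.ext fun x ↦ Subtype.ext (DFunLike.congr_fun this x.1)

end CliqueChains

section Trace

variable {X Y : Type*} {κ : X → X → Prop} {lam : Y → Y → Prop}

theorem det_of_ite_apply_eq (R : Type*) [CommRing R] [DecidableEq X] (f : X → X) (S : Finset X) :
    (Matrix.of fun i j : S ↦ if f j = i then (1 : R) else 0).det =
      if h : S.image f = S then (((fixedSetPerm f S h).sign : ℤ) : R) else 0 := by
  split_ifs with h
  · rw [← Matrix.det_permutation, ← Matrix.det_transpose]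
    congr 1 with i j
    simp [Equiv.Perm.permMatrix, PEquiv.toMatrix_apply, fixedSetPerm, Subtype.ext_iff, eq_comm]
  · obtain ⟨i, hi, himage⟩ : ∃ i ∈ S, i ∉ S.image f := by
      by_contra! hsub
      exact h (Finset.eq_of_subset_of_card_le hsub Finset.card_image_le).symm
    refine Matrix.det_eq_zero_of_row_eq_zero ⟨i, hi⟩ fun j ↦ if_neg ?_
    rintro rfl
    exact himage (Finset.mem_image_of_mem f j.2)

theorem basis_repr_map_neg_lmapDomain_self [LinearOrder X] (f : X → X) (S : Finset X) :
    (Finsupp.basisSingleOne (R := ℤ)).ExteriorAlgebra.repr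
        (map ((-1 : ℤ) • Finsupp.lmapDomain ℤ ℤ f)
          ((Finsupp.basisSingleOne (R := ℤ)).ExteriorAlgebra S)) S =
      if h : S.image f = S then (-1) ^ S.card * ((fixedSetPerm f S h).sign : ℤ) else 0 := by
  have hmatrix : (Matrix.of fun i j : S ↦ (Finsupp.basisSingleOne (R := ℤ)).repr
      (((-1 : ℤ) • Finsupp.lmapDomain ℤ ℤ f) (Finsupp.basisSingleOne (j : X))) i) =
      (-1 : ℤ) • Matrix.of fun i j : S ↦ if f j = i then (1 : ℤ) else 0 := by
    ext i j
    simp [Finsupp.single_apply, neg_ite]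
  rw [basis_repr_map_self, hmatrix, Matrix.det_smul, det_of_ite_apply_eq, Fintype.card_coe,
    mul_dite, mul_zero]
  simp only [Int.cast_id]

open Classical in
theorem one_sub_simpLef [Fintype X] [DecidableEq X] (κ : X → X → Prop) (f : X → X) :
    1 - simpLef κ f = ∑ S : Finset X, if (S : Set X).Pairwise κ then
      if h : S.image f = S then (-1) ^ S.card * ((fixedSetPerm f S h).sign : ℤ) else 0
    else 0 := by
  have hempty : ∑ S : Finset X, (if S = ∅ then (1 : ℤ) else 0) = 1 := by simp
  rw [← hempty, simpLef, ← Finset.sum_sub_distrib]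
  refine Finset.sum_congr rfl fun S _ ↦ ?_
  obtain rfl | hS := S.eq_empty_or_nonempty
  · simp [IsClique, Subsingleton.elim (fixedSetPerm f ∅ _) 1]
  · have hclique : IsClique κ S ↔ (S : Set X).Pairwise κ := and_iff_right hS
    have hpow : (-1 : ℤ) ^ S.card = -(-1) ^ (S.card - 1) := by
      rw [← Nat.sub_add_cancel hS.card_pos, pow_succ]
      simp
    by_cases hκ : (S : Set X).Pairwise κ
    · by_cases himage : S.image f = S <;> simp [hclique, hκ, hS.ne_empty, hpow, himage]
    · simp [hclique, hκ, hS.ne_empty]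

theorem trace_cliqueChainMap_neg_one [Fintype X] [DecidableEq X] {f : X → X}
    (hf : DigCont κ κ f) :
    LinearMap.trace ℤ _ (cliqueChainMap (-1) hf) = 1 - simpLef κ f := by
  classical
  let order : LinearOrder X := linearOrderOfSTO WellOrderingRel
  obtain rfl : ‹DecidableEq X› = order.toDecidableEq := Subsingleton.elim _ _
  have hspan : cliqueChains κ = Submodule.span ℤ ((Finsupp.basisSingleOne (R := ℤ)).ExteriorAlgebra
      '' (Finset.univ.filter fun S : Finset X ↦ (S : Set X).Pairwise κ : Finset (Finset X))) := by
    simpa using cliqueChains_eq_span κ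
  rw [cliqueChainMap, trace_restrict_of_eq_span_image _ _ hspan, Finset.sum_filter,
    one_sub_simpLef]
  simp only [AlgHom.toLinearMap_apply, basis_repr_map_neg_lmapDomain_self]

theorem simpLef_comp_comm_s18 [Fintype X] [DecidableEq X] [Fintype Y] [DecidableEq Y]
    {p : X → Y} {q : Y → X} (hp : DigCont κ lam p) (hq : DigCont lam κ q) :
    simpLef κ (q ∘ p) = simpLef lam (p ∘ q) := by
  have h := LinearMap.trace_comp_comm' (cliqueChainMap 1 hp) (cliqueChainMap (-1) hq)
  rw [cliqueChainMap_comp, cliqueChainMap_comp] at h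
  simpa [trace_cliqueChainMap_neg_one] using h

end Trace

section Contiguity

variable {X Y : Type*} {κ : X → X → Prop} {lam : Y → Y → Prop}

theorem contractLeft_mem_cliqueChains (d : Dual ℤ (X →₀ ℤ)) :
    ∀ x ∈ cliqueChains κ, contractLeft d x ∈ cliqueChains κ :=
  iSup₂_le (a := (cliqueChains κ).comap (contractLeft d)) fun _ hS _ hx ↦
    mem_cliqueChains_of_mem_exteriorSubalgebra hS (contractLeft_mem_exteriorSubalgebra d hx)

theorem Contiguous.rankOneHomotopy_mem_cliqueChains {f g : X → X} (h : Contiguous κ κ f g)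
    (a : X) : ∀ x ∈ cliqueChains κ,
      rankOneHomotopy (Finsupp.lmapDomain ℤ ℤ f) (Finsupp.lapply a) (Finsupp.single (f a) 1)
        (Finsupp.single (g a) 1) x ∈ cliqueChains κ := by
  refine iSup₂_le (a := (cliqueChains κ).comap _) fun S hS x hx ↦ ?_
  rw [Submodule.mem_comap, rankOneHomotopy_apply]
  by_cases ha : a ∈ S
  · have hι {y : X} (hy : y ∈ f '' S ∪ g '' S) : ι ℤ (Finsupp.single y 1) ∈
        exteriorSubalgebra (Finsupp.supported ℤ ℤ (f '' S ∪ g '' S)) :=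
      ι_mem_exteriorSubalgebra (Finsupp.single_mem_supported ℤ 1 hy)
    have himage := map_smul_lmapDomain_mem_exteriorSubalgebra (-1) f
      (contractLeft_mem_exteriorSubalgebra (Finsupp.lapply a) hx)
    rw [neg_one_smul] at himage
    refine mem_cliqueChains_of_mem_exteriorSubalgebra (h.pairwise_image_union hS)
      (mul_mem (hι (.inr ⟨a, ha, rfl⟩)) (mul_mem (hι (.inl ⟨a, ha, rfl⟩)) ?_))
    exact exteriorSubalgebra_mono (Finsupp.supported_mono Set.subset_union_left) himage
  · have hker : Finsupp.supported ℤ ℤ S ≤ LinearMap.ker (Finsupp.lapply a) := fun m hm ↦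
      Finsupp.notMem_support_iff.mp fun hmem ↦ ha (hm hmem)
    rw [contractLeft_eq_zero_of_mem_exteriorSubalgebra hker hx]
    simp

theorem lmapDomain_update (R : Type*) [Ring R] [DecidableEq X] (f : X → Y) (a : X) (y : Y) :
    Finsupp.lmapDomain R R (Function.update f a y) = Finsupp.lmapDomain R R f +
      (Finsupp.lapply a).smulRight (Finsupp.single y 1 - Finsupp.single (f a) 1) := by
  ext x : 2
  obtain rfl | hx := eq_or_ne x a
  · simp
  · simp [hx, hx.symm]

theorem simpLef_update_of_contiguous [Fintype X] [DecidableEq X] {f : X → X} {a y : X}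
    (h : Contiguous κ κ f (Function.update f a y)) :
    simpLef κ (Function.update f a y) = simpLef κ f := by
  let ε : Dual ℤ (X →₀ ℤ) := Finsupp.linearCombination ℤ 1
  have hε : ε ∘ₗ Finsupp.lmapDomain ℤ ℤ f = ε := by ext; simp [ε]
  let boundary := (contractLeft ε).restrict (contractLeft_mem_cliqueChains (κ := κ) ε)
  let homotopy := LinearMap.restrict _ (h.rankOneHomotopy_mem_cliqueChains a)
  have hcomm : cliqueChainMap (-1) h.right - cliqueChainMap (-1) h.left =
      boundary * homotopy - homotopy * boundary := by
    ext x
    have := map_neg_add_smulRight_sub (Finsupp.lmapDomain ℤ ℤ f) (Finsupp.lapply a) ε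
      (Finsupp.single (f a) 1) (Finsupp.single y 1) hε (by simp [ε]) (by simp [ε]) x
    rw [← lmapDomain_update] at this
    simpa [cliqueChainMap, boundary, homotopy] using this
  have htrace := congrArg (LinearMap.trace ℤ _) hcomm
  rw [map_sub, map_sub, LinearMap.trace_mul_comm, sub_self, trace_cliqueChainMap_neg_one,
    trace_cliqueChainMap_neg_one] at htrace
  linarith

theorem Contiguous.simpLef_eq [Fintype X] [DecidableEq X] {f g : X → X}
    (h : Contiguous κ κ f g) : simpLef κ f = simpLef κ g := by
  suffices ∀ A : Finset X, simpLef κ (A.piecewise g f) = simpLef κ f by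
    simpa using (this Finset.univ).symm
  intro A
  induction A using Finset.induction with
  | empty => simp
  | insert a A _ ih =>
    have hstep : Contiguous κ κ (A.piecewise g f) ((insert a A).piecewise g f) := by
      have hvalue (B : Finset X) (x : X) : B.piecewise g f x ∈ ({f x, g x} : Set X) :=
        B.piecewise_cases g f (· ∈ ({f x, g x} : Set X)) (by simp) (by simp)
      exact h.mono fun x ↦ Set.pair_subset (hvalue _ x) (hvalue _ x)
    rw [Finset.piecewise_insert] at hstep ⊢
    rw [simpLef_update_of_contiguous hstep, ih]

theorem StrongHomotopic.simpLef_eq [Fintype X] [DecidableEq X] {f g : X → X}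
    (h : StrongHomotopic κ κ f g) : simpLef κ f = simpLef κ g := by
  have hchain := h.reflTransGen_contiguous
  clear h
  induction hchain with
  | refl => rfl
  | tail _ hstep ih => exact ih.trans hstep.simpLef_eq

end Contiguity

theorem simpLef_strong_homotopy_equivalence_general {X Y : Type*} [Fintype X] [DecidableEq X]
    [Fintype Y] [DecidableEq Y] {κ : X → X → Prop} {lam : Y → Y → Prop}
    {f : X → X} (hf : DigCont κ κ f) {g : X → Y} {h : Y → X} (hg : DigCont κ lam g)
    (hh : DigCont lam κ h) (hgh : StrongHomotopic κ κ (h ∘ g) id) :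
    simpLef κ f = simpLef lam (g ∘ f ∘ h) :=
  calc
    simpLef κ f = simpLef κ ((f ∘ h) ∘ g) := (hgh.comp_left hf).simpLef_eq.symm
    _ = simpLef lam (g ∘ f ∘ h) := simpLef_comp_comm_s18 hg (hf.comp hh)

/-- Let `(X,κ)` and `(Y,λ)` be finite digital images, let `f : X → X` be a continuous
self-map, and let `g : X → Y` be a strong homotopy equivalence with strong homotopy
inverse `h : Y → X` (i.e. `g, h` continuous, `h ∘ g ≃* id_X` and `g ∘ h ≃* id_Y`).
Then `L(f) = L(g ∘ f ∘ h)`. -/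
theorem simpLef_strong_homotopy_equivalence {X Y : Type*} [Fintype X] [DecidableEq X]
    [Fintype Y] [DecidableEq Y]
    (κ : X → X → Prop) (hκsym : Symmetric κ) (hκirr : Irreflexive κ)
    (lam : Y → Y → Prop) (hlamsym : Symmetric lam) (hlamirr : Irreflexive lam)
    (f : X → X) (hf : DigCont κ κ f)
    (g : X → Y) (h : Y → X) (hg : DigCont κ lam g) (hh : DigCont lam κ h)
    (hgh : StrongHomotopic κ κ (h ∘ g) id) (hhg : StrongHomotopic lam lam (g ∘ h) id) :
    simpLef κ f = simpLef lam (g ∘ f ∘ h) :=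
  simpLef_strong_homotopy_equivalence_general hf hg hh hgh
end

section
/- Let X ⊆ ℤ^n and Y ⊆ ℤ^m be finite digital images with c1-adjacency, where n, m ≤ 3, and suppose X and Y are homotopy equivalent, i.e., there exist c1-continuous maps g : X → Y and h : Y → X with h ∘ g ≃ id_X and g ∘ h ≃ id_Y. Then the cubical Lefschetz spectra of X and Y coincide: {L̄(f) : f a c1-continuous self-map of X} = {L̄(f′) : f′ a c1-continuous self-map of Y}. -/
/-!
Call a map from the vertices of the standard `q`-cube to the lattice a singular cube if it sends
edges to equal or `c1`-adjacent points. Injective singular cubes are precisely the parametrized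
elementary cubes. The coefficient of an elementary cube in an arbitrary singular cube has a closed
form: the indicator of the plane of the elementary cube times the cup product, in its directions, of
the coboundaries of the step functions that jump across the cube. A product of closed `1`-cochains
is closed, so these coefficients define a chain map to the complex of oriented elementary cubes, and
every continuous map acts on that complex. On the diagonal its coefficient at `σ` is `ε(f, σ)` if
`f(σ) = σ` and `0` otherwise, so `L̄(f)` is the alternating sum of the traces of `f` on cellular
chains.

Each step of a homotopy induces, through prisms, a chain homotopy `P`. As `tr(P∂) = tr(∂P)`, the
difference of two alternating sums telescopes to a term in a dimension without cubes, so `L̄` is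
homotopy invariant. For a homotopy equivalence `g : X → Y` with inverse `h` and a self-map `f` of
`X`, cyclicity of the trace then gives `L̄(g ∘ f ∘ h) = L̄(f ∘ h ∘ g) = L̄(f)`.

To avoid choosing orientations, traces are taken over elementary cubes with ordered directions, so
that every `q`-cube is counted `q !` times.
-/

namespace CubicalLefschetz

section CupProduct

variable {α R : Type*} [CommRing R] {q : ℕ}

/-- The face `x i = s` of a singular cube `u`, a singular `q`-cube in `α` being a map from the
vertex set `Fin q → Bool` of the standard cube. -/
def face (u : (Fin (q + 1) → Bool) → α) (i : Fin (q + 1)) (s : Bool) : (Fin q → Bool) → α :=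
  fun x => u (i.insertNth s x)

/-- The coboundary of a cubical cochain `Φ`, evaluated at the singular cube `u`. -/
def coboundary (Φ : ((Fin q → Bool) → α) → R) (u : (Fin (q + 1) → Bool) → α) : R :=
  ∑ i : Fin (q + 1), (-1) ^ (i : ℕ) * (Φ (face u i true) - Φ (face u i false))

theorem insertNth_false_bot (i : Fin (q + 1)) :
    i.insertNth (α := fun _ => Bool) false ⊥ = (⊥ : Fin (q + 1) → Bool) :=
  Fin.insertNth_eq_iff.2 ⟨rfl, rfl⟩

theorem face_false_bot (u : (Fin (q + 1) → Bool) → α) (i : Fin (q + 1)) :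
    face u i false ⊥ = u ⊥ :=
  congrArg u (insertNth_false_bot i)

theorem face_face (u : (Fin (q + 2) → Bool) → α) (i : Fin (q + 2)) (j : Fin (q + 1))
    (s t : Bool) :
    face (face u i s) j t = face (face u (i.succAbove j) t) (j.predAbove i) s := by
  funext x
  refine congrArg u ((Fin.insertNth_eq_iff.2 ⟨?_, funext fun k => ?_⟩))
  · have h := Fin.insertNth_apply_succAbove (α := fun _ => Bool) (i.succAbove j) t
      ((j.predAbove i).insertNth s x) (j.predAbove i)
    rw [Fin.succAbove_succAbove_predAbove, Fin.insertNth_apply_same] at h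
    exact h.symm
  · obtain rfl | ⟨k, rfl⟩ := Fin.eq_self_or_eq_succAbove j k
    · simp only [Fin.removeNth_apply, Fin.insertNth_apply_same]
    · rw [Fin.removeNth_apply, ← Fin.succAbove_succAbove_succAbove_predAbove]
      simp only [Fin.insertNth_apply_succAbove]

theorem sum_sum_eq_zero_of_swap {G : Fin (q + 2) → Fin (q + 1) → R}
    (hG : ∀ i j, G (i.succAbove j) (j.predAbove i) = G i j) :
    ∑ i : Fin (q + 2), ∑ j : Fin (q + 1), (-1) ^ (i + j : ℕ) * G i j = 0 := by
  rw [← Fintype.sum_prod_type']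
  refine Finset.sum_involution (fun p _ => (p.1.succAbove p.2, p.2.predAbove p.1))
    (fun p _ => ?_) (fun p _ _ h => ?_) (fun _ _ => Finset.mem_univ _) (fun p _ => ?_)
  · rw [hG, Fin.neg_one_pow_succAbove_add_predAbove]; ring
  · exact Fin.succAbove_ne _ _ (congrArg Prod.fst h)
  · exact Prod.ext (Fin.succAbove_succAbove_predAbove _ _)
      (Fin.predAbove_predAbove_succAbove _ _)

/-- The cup product `δh₀ ∪ ⋯ ∪ δh_{q-1}` of the coboundaries of the functions `h k`, evaluated
at the singular cube `u`. -/
def cupDiff : {q : ℕ} → (Fin q → α → R) → ((Fin q → Bool) → α) → R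
  | 0, _, _ => 1
  | q + 1, h, u => ∑ i : Fin (q + 1), (-1) ^ (i : ℕ) *
      ((h 0 (face u i true ⊥) - h 0 (u ⊥)) * cupDiff (Fin.tail h) (face u i true))

theorem cupDiff_cons (a : α → R) (h : Fin q → α → R) (u : (Fin (q + 1) → Bool) → α) :
    cupDiff (Fin.cons a h : Fin (q + 1) → α → R) u = ∑ i : Fin (q + 1), (-1) ^ (i : ℕ) *
      ((a (face u i true ⊥) - a (u ⊥)) * cupDiff h (face u i true)) := by
  simp only [cupDiff, Fin.cons_zero, Fin.tail_cons]

theorem coboundary_cupDiff (h : Fin q → α → R) (u : (Fin (q + 1) → Bool) → α) :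
    coboundary (cupDiff h) u = 0 := by
  induction q with
  | zero => simp [coboundary, cupDiff]
  | succ q ih =>
    obtain ⟨a, h, rfl⟩ : ∃ a h', h = Fin.cons a h' := ⟨h 0, Fin.tail h, (Fin.cons_self_tail h).symm⟩
    set E := cupDiff h
    let v (i : Fin (q + 2)) (j : Fin (q + 1)) (s t : Bool) := face (face u i s) j t
    have v_swap (i j s t) : v (i.succAbove j) (j.predAbove i) s t = v i j t s :=
      (face_face u i j t s).symm
    let S (i : Fin (q + 2)) (j : Fin (q + 1)) : R :=
      (a (v i j true true ⊥) - a (u ⊥)) * E (v i j true true)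
        - (a (v i j false true ⊥) - a (u ⊥)) * E (v i j false true)
        - (a (v i j true false ⊥) - a (u ⊥)) * E (v i j true false)
    have hS : ∑ i : Fin (q + 2), ∑ j : Fin (q + 1), (-1) ^ (i + j : ℕ) * S i j = 0 :=
      sum_sum_eq_zero_of_swap fun i j => by simp only [S, v_swap]; ring
    calc coboundary (cupDiff (Fin.cons a h : Fin (q + 1) → α → R)) u
        = ∑ i : Fin (q + 2), (∑ j : Fin (q + 1), (-1) ^ (i + j : ℕ) * S i j - (-1) ^ (i : ℕ) *
            ((a (face u i true ⊥) - a (u ⊥)) * coboundary E (face u i true))) := by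
          refine Finset.sum_congr rfl fun i _ => ?_
          simp only [cupDiff_cons, coboundary, Finset.mul_sum, ← Finset.sum_sub_distrib]
          refine Finset.sum_congr rfl fun j _ => ?_
          simp only [S, v, face_false_bot]
          ring
      _ = 0 := by simp only [E, ih, mul_zero, sub_zero, hS]

/-- `u` sends the edges of the standard cube to pairs related by `r`. -/
def IsSingular (r : α → α → Prop) (u : (Fin q → Bool) → α) : Prop :=
  ∀ x i s, r (u x) (u (Function.update x i s))

theorem IsSingular.face {r : α → α → Prop} {u : (Fin (q + 1) → Bool) → α} (hu : IsSingular r u)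
    (i : Fin (q + 1)) (s : Bool) : IsSingular r (face u i s) := fun x j t => by
  simpa only [CubicalLefschetz.face, Fin.insertNth_update] using
    hu (i.insertNth s x) (i.succAbove j) t

theorem IsSingular.rel_bot_face {r : α → α → Prop} {u : (Fin (q + 1) → Bool) → α}
    (hu : IsSingular r u) (i : Fin (q + 1)) : r (u ⊥) (CubicalLefschetz.face u i true ⊥) := by
  have h := hu (i.insertNth false ⊥) i true
  rw [Fin.update_insertNth, insertNth_false_bot] at h
  exact h

theorem cupDiff_cons_cons_swap {r : α → α → Prop} {a c : α → R} (h : Fin q → α → R)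
    {u : (Fin (q + 2) → Bool) → α} (hu : IsSingular r u)
    (hac : ∀ y z, r y z → (a z - a y) * (c z - c y) = 0) :
    cupDiff (Fin.cons c (Fin.cons a h : Fin (q + 1) → α → R) : Fin (q + 2) → α → R) u =
      -cupDiff (Fin.cons a (Fin.cons c h : Fin (q + 1) → α → R) : Fin (q + 2) → α → R) u := by
  let v (i : Fin (q + 2)) (j : Fin (q + 1)) := face (face u i true) j true
  let G (i : Fin (q + 2)) (j : Fin (q + 1)) : R :=
    (a (v i j ⊥) - a (u ⊥)) * (c (v i j ⊥) - c (u ⊥)) * cupDiff h (v i j)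
  have hG : ∑ i : Fin (q + 2), ∑ j : Fin (q + 1), (-1) ^ (i + j : ℕ) * G i j = 0 :=
    sum_sum_eq_zero_of_swap fun i j => by
      simp only [G, show v (i.succAbove j) (j.predAbove i) = v i j from (face_face ..).symm]
  rw [eq_neg_iff_add_eq_zero, ← hG]
  simp only [cupDiff_cons, Finset.mul_sum, ← Finset.sum_add_distrib]
  refine Finset.sum_congr rfl fun i _ => Finset.sum_congr rfl fun j _ => ?_
  have h₁ := hac _ _ (hu.rel_bot_face i)
  have h₂ := hac _ _ ((hu.face i true).rel_bot_face j)
  simp only [G, v]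
  linear_combination (-(-1) ^ (i + j : ℕ) * cupDiff h (v i j)) * (h₁ + h₂)

theorem cupDiff_comp_cycleRange_symm {r : α → α → Prop} {h : Fin (q + 1) → α → R}
    {u : (Fin (q + 1) → Bool) → α} (hu : IsSingular r u)
    (hh : ∀ k l, k ≠ l → ∀ y z, r y z → (h k z - h k y) * (h l z - h l y) = 0)
    (k : Fin (q + 1)) :
    cupDiff (h ∘ k.cycleRange.symm) u = (-1) ^ (k : ℕ) * cupDiff h u := by
  rw [← Fin.cons_removeNth_eq_comp_cycleRange_symm]
  induction q with
  | zero => simp [Fin.fin_one_eq_zero k]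
  | succ q ih =>
    obtain ⟨a, h, rfl⟩ : ∃ a h', h = Fin.cons a h' := ⟨h 0, Fin.tail h, (Fin.cons_self_tail h).symm⟩
    obtain rfl | ⟨k, rfl⟩ := Fin.eq_zero_or_eq_succ k
    · simp
    have hcons : k.succ.removeNth (Fin.cons a h : Fin (q + 2) → α → R) =
        Fin.cons a (k.removeNth h) := Fin.cons_comp_succ_succAbove ..
    have htail (i : Fin (q + 2)) :
        cupDiff (Fin.cons (h k) (k.removeNth h) : Fin (q + 1) → α → R) (face u i true) =
          (-1) ^ (k : ℕ) * cupDiff h (face u i true) :=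
      ih (hu.face i true) (fun k l hkl => hh k.succ l.succ (by simpa using hkl)) k
    rw [hcons, Fin.cons_succ, cupDiff_cons_cons_swap (a := a) (c := h k) (k.removeNth h) hu
      (hh 0 k.succ (Fin.succ_ne_zero k).symm), cupDiff_cons, cupDiff_cons, ← Finset.sum_neg_distrib,
      Finset.mul_sum]
    refine Finset.sum_congr rfl fun i _ => ?_
    rw [htail, Fin.val_succ]
    ring

theorem exists_face_of_cupDiff_ne_zero {r : α → α → Prop} {h : Fin (q + 1) → α → R}
    {u : (Fin (q + 1) → Bool) → α} (hu : IsSingular r u)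
    (hh : ∀ k l, k ≠ l → ∀ y z, r y z → (h k z - h k y) * (h l z - h l y) = 0)
    (hcup : cupDiff h u ≠ 0) (k : Fin (q + 1)) :
    ∃ i, h k (face u i true ⊥) ≠ h k (u ⊥) ∧ cupDiff (k.removeNth h) (face u i true) ≠ 0 := by
  have hcycle : cupDiff (h ∘ k.cycleRange.symm) u ≠ 0 := by
    rw [cupDiff_comp_cycleRange_symm hu hh k]
    obtain hk | hk := neg_one_pow_eq_or R (k : ℕ) <;> simpa [hk] using hcup
  rw [← Fin.cons_removeNth_eq_comp_cycleRange_symm, cupDiff_cons] at hcycle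
  obtain ⟨i, -, hi⟩ := Finset.exists_ne_zero_of_sum_ne_zero hcycle
  have hi := right_ne_zero_of_mul hi
  exact ⟨i, sub_ne_zero.1 (left_ne_zero_of_mul hi), right_ne_zero_of_mul hi⟩

theorem cupDiff_eq_det {h : Fin q → α → R} {u : (Fin q → Bool) → α} {c : Fin q → R}
    {A : Matrix (Fin q) (Fin q) R}
    (hu : ∀ k x, h k (u x) = c k + ∑ i, if x i then A k i else 0) : cupDiff h u = A.det := by
  induction q with
  | zero => simp [cupDiff]
  | succ q ih =>
    rw [cupDiff, Matrix.det_succ_row_zero]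
    refine Finset.sum_congr rfl fun i _ => ?_
    have hE : cupDiff (Fin.tail h) (face u i true) = (A.submatrix Fin.succ i.succAbove).det :=
      ih (c := fun k => c k.succ + A k.succ i) fun k x => by
        simp [Fin.tail, face, hu, Fin.sum_univ_succAbove _ i, add_assoc]
    rw [hE, face, hu, hu]
    simp [Fin.sum_univ_succAbove _ i, mul_assoc]

end CupProduct

section Reparam

variable {q : ℕ}

/-- The automorphism of the standard cube that permutes the coordinates by `π` and reflects those
marked by `r`. -/
def reparam (π : Equiv.Perm (Fin q)) (r : Fin q → Bool) (x : Fin q → Bool) : Fin q → Bool :=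
  fun i => xor (x (π i)) (r i)

/-- The determinant of the linear part of `reparam π r`. -/
def reparamSign (π : Equiv.Perm (Fin q)) (r : Fin q → Bool) : ℤ :=
  Equiv.Perm.sign π * ∏ i, if r i then -1 else 1

theorem reparam_comp_reparam (π π' : Equiv.Perm (Fin q)) (r r' : Fin q → Bool) :
    reparam π r ∘ reparam π' r' = reparam (π' * π) fun i => xor (r' (π i)) (r i) := by
  funext x i
  simp [reparam]

theorem reparamSign_mul (π π' : Equiv.Perm (Fin q)) (r r' : Fin q → Bool) :
    reparamSign (π' * π) (fun i => xor (r' (π i)) (r i)) =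
      reparamSign π r * reparamSign π' r' := by
  have hprod : ∏ i, (if xor (r' (π i)) (r i) then (-1 : ℤ) else 1) =
      (∏ i, if r' i then -1 else 1) * ∏ i, if r i then -1 else 1 := by
    rw [← Equiv.prod_comp π fun i => if r' i then (-1 : ℤ) else 1, ← Finset.prod_mul_distrib]
    exact Finset.prod_congr rfl fun i _ => by cases r' (π i) <;> cases r i <;> rfl
  rw [reparamSign, hprod, Equiv.Perm.sign_mul, reparamSign, reparamSign]
  push_cast
  ring

theorem reparamSign_mul_self (π : Equiv.Perm (Fin q)) (r : Fin q → Bool) :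
    reparamSign π r * reparamSign π r = 1 := by
  have hprod : (∏ i, if r i then (-1 : ℤ) else 1) * (∏ i, if r i then (-1 : ℤ) else 1) = 1 := by
    rw [← Finset.prod_mul_distrib]
    exact Finset.prod_eq_one fun i _ => by cases r i <;> rfl
  rw [reparamSign, mul_mul_mul_comm, hprod, mul_one, ← Units.val_mul, Int.units_mul_self]
  rfl

theorem reparam_leftInverse (π : Equiv.Perm (Fin q)) (r : Fin q → Bool) :
    reparam π r ∘ reparam π.symm (r ∘ π.symm) = id := by
  rw [reparam_comp_reparam]
  funext x i
  simp [reparam]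

theorem reparam_bijective (π : Equiv.Perm (Fin q)) (r : Fin q → Bool) :
    Function.Bijective (reparam π r) :=
  Finite.surjective_iff_bijective.1 fun x => ⟨_, congrFun (reparam_leftInverse π r) x⟩

end Reparam

section Lattice

variable {n q : ℕ}

/-- The relation "equal or `c1`-adjacent" on lattice points. -/
def Near (y z : Fin n → ℤ) : Prop := y = z ∨ c1Adj y z

theorem Near.symm {y z : Fin n → ℤ} (h : Near y z) : Near z y :=
  h.imp Eq.symm fun h => by simpa only [c1Adj, abs_sub_comm] using h

theorem near_add_single (y : Fin n → ℤ) (j : Fin n) {s : ℤ} (hs : s = 1 ∨ s = -1) :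
    Near y (y + Pi.single j s) := by
  right
  rcases hs with rfl | rfl <;> simp [c1Adj, Pi.single_apply, apply_ite abs]

theorem Near.exists_single {y z : Fin n → ℤ} (h : Near y z) (hne : y ≠ z) :
    ∃ j s, (s = 1 ∨ s = -1) ∧ z = y + Pi.single j s := by
  obtain ⟨j, hj⟩ := Function.ne_iff.1 hne
  have hsum : ∑ i, |z i - y i| = 1 := h.symm.resolve_left hne.symm
  rw [← Finset.add_sum_erase _ _ (Finset.mem_univ j)] at hsum
  have hnonneg : ∀ i ∈ Finset.univ.erase j, 0 ≤ |z i - y i| := fun i _ => abs_nonneg _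
  have hj1 : 1 ≤ |z j - y j| := Int.one_le_abs (sub_ne_zero.2 hj.symm)
  have hrest : ∀ i ≠ j, z i = y i := fun i hi => by
    have h0 := (Finset.sum_eq_zero_iff_of_nonneg hnonneg).1
      (by linarith [Finset.sum_nonneg hnonneg]) i (by simpa using hi)
    exact sub_eq_zero.1 (abs_eq_zero.1 h0)
  refine ⟨j, z j - y j, (abs_eq zero_le_one).1 (by linarith [Finset.sum_nonneg hnonneg]), ?_⟩
  funext k
  obtain rfl | hk := eq_or_ne k j
  · simp
  · simp [hk, hrest k hk]

theorem Near.eq_or_eq {y z : Fin n → ℤ} (h : Near y z) {k l : Fin n} (hkl : k ≠ l) :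
    y k = z k ∨ y l = z l := by
  by_contra! hne
  obtain ⟨j, s, -, rfl⟩ := h.exists_single (fun h => hne.1 (congrFun h k))
  simp only [Pi.add_apply, Pi.single_apply] at hne
  grind

/-- The elementary cube with minimal corner `b` and `i`-th edge in the coordinate direction `e i`,
parametrized by the standard cube. -/
def cube (b : Fin n → ℤ) (e : Fin q → Fin n) (x : Fin q → Bool) : Fin n → ℤ :=
  b + ∑ i, if x i then Pi.single (e i) 1 else 0

theorem cube_apply (b : Fin n → ℤ) {e : Fin q → Fin n} (he : Function.Injective e)
    (x : Fin q → Bool) (i : Fin q) : cube b e x (e i) = b (e i) + if x i then 1 else 0 := by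
  have h (j : Fin q) : (if x j then Pi.single (e j) (1 : ℤ) else 0 : Fin n → ℤ) (e i) =
      if j = i then (if x i then 1 else 0) else 0 := by
    obtain rfl | hji := eq_or_ne j i
    · cases hx : x j <;> simp
    · cases hx : x j <;> simp [hji, he.ne hji.symm]
  simp [cube, h]

theorem cube_apply_of_notMem_range (b : Fin n → ℤ) {e : Fin q → Fin n} (x : Fin q → Bool)
    {k : Fin n} (hk : k ∉ Set.range e) : cube b e x k = b k := by
  have h (j : Fin q) : (if x j then Pi.single (e j) (1 : ℤ) else 0 : Fin n → ℤ) k = 0 := by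
    have hkj : k ≠ e j := fun h => hk ⟨j, h.symm⟩
    cases x j <;> simp [hkj]
  simp [cube, h]

theorem cube_bot (b : Fin n → ℤ) (e : Fin q → Fin n) : cube b e ⊥ = b := by simp [cube]

theorem cube_injective (b : Fin n → ℤ) {e : Fin q → Fin n} (he : Function.Injective e) :
    Function.Injective (cube b e) := fun x y hxy => funext fun i => by
  have h := congrFun hxy (e i)
  simp only [cube_apply b he, add_right_inj] at h
  cases hx : x i <;> cases hy : y i <;> simp [hx, hy] at h ⊢

theorem sum_ite_update {β : Type*} [AddCommGroup β] (d : Fin q → β) (x : Fin q → Bool) (i : Fin q) :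
    (∑ k, if Function.update x i true k then d k else 0) =
      (∑ k, if Function.update x i false k then d k else 0) + d i := by
  rw [← sub_eq_iff_eq_add', ← Finset.sum_sub_distrib, Finset.sum_eq_single i] <;>
    simp +contextual [Function.update_of_ne]

theorem isSingular_cube (b : Fin n → ℤ) (e : Fin q → Fin n) : IsSingular Near (cube b e) := by
  intro x i s
  have h : Near (cube b e (Function.update x i false)) (cube b e (Function.update x i true)) := by
    rw [cube, cube, sum_ite_update, ← add_assoc]
    exact near_add_single _ _ (.inl rfl)
  obtain hx | hx := eq_or_ne (x i) s
  · rw [← hx, Function.update_eq_self]; exact .inl rfl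
  · conv_lhs => rw [← Function.update_eq_self i x]
    cases s <;> simp only [ne_eq, Bool.not_eq_true, Bool.not_eq_false] at hx <;> rw [hx]
    exacts [h.symm, h]

theorem add_eq_add_of_near_square {p a c z : Fin n → ℤ} (hpa : Near p a) (hpc : Near p c)
    (haz : Near a z) (hcz : Near c z) (hne_pa : p ≠ a) (hne_pc : p ≠ c) (hne_az : a ≠ z)
    (hne_cz : c ≠ z) (hne_pz : p ≠ z) (hne_ac : a ≠ c) : z + p = a + c := by
  obtain ⟨i, s, hs, rfl⟩ := hpa.exists_single hne_pa
  obtain ⟨j, t, ht, rfl⟩ := hpc.exists_single hne_pc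
  obtain ⟨k, s', hs', rfl⟩ := haz.exists_single hne_az
  obtain ⟨l, t', ht', hz⟩ := hcz.exists_single hne_cz
  have hk : k = j ∧ s' = t := by
    have hjl : ¬(l = j ∧ t' = -t) := by
      rintro ⟨rfl, rfl⟩
      exact hne_pz (by rw [hz, add_assoc, ← Pi.single_add]; simp)
    have hij : ¬(i = j ∧ s = t) := by
      rintro ⟨rfl, rfl⟩
      exact hne_ac rfl
    have hi := congrFun hz i
    have hj := congrFun hz j
    simp only [Pi.add_apply, Pi.single_apply, if_true] at hi hj
    grind
  rw [hk.1, hk.2]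
  abel

theorem eq_of_forall_update {β : Type*} {F : (Fin q → Bool) → β}
    (hF : ∀ x i, F (Function.update x i true) = F (Function.update x i false))
    (x y : Fin q → Bool) : F x = F y := by
  have hupdate (x i s) : F (Function.update x i s) = F x := by
    conv_rhs => rw [← Function.update_eq_self i x]
    cases s <;> cases x i <;> simp only [hF]
  have h (S : Finset (Fin q)) : F (S.piecewise x y) = F y := by
    induction S using Finset.induction with
    | empty => rw [Finset.piecewise_empty]
    | insert i S _ ih => rw [Finset.piecewise_insert, hupdate, ih]
  simpa using h Finset.univ

theorem IsSingular.update_sub_update {u : (Fin q → Bool) → Fin n → ℤ} (hu : IsSingular Near u)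
    (hinj : Function.Injective u) (x y : Fin q → Bool) (i : Fin q) :
    u (Function.update x i true) - u (Function.update x i false) =
      u (Function.update y i true) - u (Function.update y i false) := by
  refine eq_of_forall_update
    (F := fun x => u (Function.update x i true) - u (Function.update x i false))
    (fun x j => ?_) x y
  obtain rfl | hij := eq_or_ne i j
  · simp only [Function.update_idem]
  let v (s t : Bool) := Function.update (Function.update x j t) i s
  have hi (s s' t) : Near (u (v s t)) (u (v s' t)) := by
    have h := hu (v s t) i s'
    rwa [Function.update_idem] at h
  have hj (s t t') : Near (u (v s t)) (u (v s t')) := by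
    have h := hu (v s t) j t'
    rwa [show Function.update (v s t) j t' = v s t' by
      simp only [v, Function.update_comm hij, Function.update_idem]] at h
  have hne {s t s' t'} (h : s ≠ s' ∨ t ≠ t') : u (v s t) ≠ u (v s' t') := fun huv => by
    have hv := hinj huv
    have h1 := congrFun hv i
    have h2 := congrFun hv j
    simp only [v, Function.update_self, Function.update_of_ne hij.symm] at h1 h2
    tauto
  rw [sub_eq_sub_iff_add_eq_add]
  exact (add_eq_add_of_near_square (hi false true false) (hj false false true) (hj true false true)
    (hi false true true) (hne (by simp)) (hne (by simp)) (hne (by simp)) (hne (by simp))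
    (hne (by simp)) (hne (by simp)))

theorem IsSingular.exists_eq_add_sum {u : (Fin q → Bool) → Fin n → ℤ} (hu : IsSingular Near u)
    (hinj : Function.Injective u) :
    ∃ d : Fin q → Fin n → ℤ, ∀ x, u x = u ⊥ + ∑ i, if x i then d i else 0 := by
  let d (i : Fin q) := u (Function.update ⊥ i true) - u (Function.update ⊥ i false)
  refine ⟨d, fun x => sub_eq_iff_eq_add.1 ?_⟩
  refine (eq_of_forall_update (F := fun x => u x - ∑ i, if x i then d i else 0)
    (fun x i => ?_) x ⊥).trans (by simp)
  have h := hu.update_sub_update hinj x ⊥ i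
  rw [sum_ite_update, sub_add_eq_sub_sub_swap, show d i = _ from h.symm, sub_sub_cancel]

theorem injective_of_injective_add_sum {c : Fin n → ℤ} {e : Fin q → Fin n} {s : Fin q → ℤ}
    (hs : ∀ i, s i = 1 ∨ s i = -1)
    (hinj : Function.Injective fun x : Fin q → Bool =>
      c + ∑ i, if x i then Pi.single (e i) (s i) else 0) :
    Function.Injective e := by
  intro i j hij
  by_contra hne
  let v (a b : Bool) : Fin q → Bool := Function.update (Function.update ⊥ j b) i a
  have hv (a b) : (∑ k, if v a b k then (Pi.single (e k) (s k) : Fin n → ℤ) else 0) =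
      Pi.single (e j) ((if a then s i else 0) + if b then s j else 0) := by
    rw [Fintype.sum_eq_add i j hne fun k hk => by simp [v, hk.1, hk.2], ← hij, Pi.single_add]
    cases a <;> cases b <;> simp [v, Ne.symm hne, hij]
  have hsum : s i = s j ∨ s i + s j = 0 := by grind
  obtain h | h := hsum
  · have hxy := congrFun (@hinj (v true false) (v false true) (by simp [hv, h])) i
    simp [v] at hxy
  · have hxy := congrFun (@hinj (v true true) (v false false) (by simp [hv, h])) i
    simp [v] at hxy

theorem IsSingular.exists_eq_cube_comp_reparam {u : (Fin q → Bool) → Fin n → ℤ}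
    (hu : IsSingular Near u) (hinj : Function.Injective u) :
    ∃ b e r, Function.Injective e ∧ u = cube b e ∘ reparam 1 r := by
  obtain ⟨d, hd⟩ := hu.exists_eq_add_sum hinj
  have hsingle (i) : ∃ j s, (s = 1 ∨ s = -1) ∧ d i = Pi.single j s := by
    have hux : u (Function.update ⊥ i true) = u ⊥ + d i := by
      rw [hd, sum_ite_update, show Function.update (⊥ : Fin q → Bool) i false = ⊥ from
        Function.update_eq_self i ⊥]
      simp
    have hne : u ⊥ ≠ u ⊥ + d i := by
      rw [← hux]
      refine hinj.ne fun h => ?_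
      simpa using congrFun h i
    obtain ⟨j, s, hs, h⟩ := (hux ▸ hu ⊥ i true : Near (u ⊥) (u ⊥ + d i)).exists_single hne
    exact ⟨j, s, hs, add_left_cancel h⟩
  choose e s hs hde using hsingle
  refine ⟨u ⊥ + ∑ i, if s i = -1 then d i else 0, e, fun i => decide (s i = -1), ?_, ?_⟩
  · refine injective_of_injective_add_sum (c := u ⊥) hs ?_
    simpa only [← hde, ← hd] using hinj
  · funext x
    rw [Function.comp_apply, cube, hd x, add_assoc, ← Finset.sum_add_distrib]
    congr 1
    refine Finset.sum_congr rfl fun i _ => ?_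
    obtain hi | hi := hs i <;> cases hx : x i <;> simp [reparam, hx, hi, hde, ← Pi.single_add]

end Lattice

section CubeCoeff

open Matrix (vecCons)

variable {n q : ℕ}

/-- The indicator function of the integers larger than `a`. -/
def heaviside (a t : ℤ) : ℤ := if a < t then 1 else 0

theorem heaviside_sub_one_sub_heaviside (a t : ℤ) :
    heaviside (a - 1) t - heaviside a t = if t = a then 1 else 0 := by
  grind [heaviside]

open Classical in
/-- The indicator function of the affine subspace through `b` spanned by the coordinate directions
in the range of `e`. -/
noncomputable def planeIndicator (b : Fin n → ℤ) (e : Fin q → Fin n) (y : Fin n → ℤ) : ℤ :=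
  if ∀ k ∉ Set.range e, y k = b k then 1 else 0

/-- The coefficient of the oriented elementary cube `cube b e` in the chain represented by the
singular cube `u`: a cubical cochain dual to `cube b e`. -/
noncomputable def cubeCoeff (b : Fin n → ℤ) (e : Fin q → Fin n) (u : (Fin q → Bool) → Fin n → ℤ) :
    ℤ :=
  planeIndicator b e (u ⊥) * cupDiff (fun k y => heaviside (b (e k)) (y (e k))) u

theorem planeIndicator_congr (b : Fin n → ℤ) {e : Fin q → Fin n} {y z : Fin n → ℤ}
    (h : ∀ k ∉ Set.range e, y k = z k) : planeIndicator b e y = planeIndicator b e z := by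
  simp only [planeIndicator]
  exact if_congr (forall₂_congr fun k hk => by rw [h k hk]) rfl rfl

theorem planeIndicator_eq_mul (b : Fin n → ℤ) {e : Fin q → Fin n} {j : Fin n}
    (hj : j ∉ Set.range e) (y : Fin n → ℤ) :
    planeIndicator b e y = planeIndicator b (vecCons j e) y *
      (heaviside (b j - 1) (y j) - heaviside (b j) (y j)) := by
  rw [heaviside_sub_one_sub_heaviside, planeIndicator, planeIndicator, ite_zero_mul_ite_zero,
    mul_one]
  refine if_congr ?_ rfl rfl
  simp only [Matrix.range_cons, Set.singleton_union, Set.mem_insert_iff, not_or]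
  refine ⟨fun h => ⟨fun k hk => h k hk.2, h j hj⟩, fun h k hk => ?_⟩
  obtain rfl | hkj := eq_or_ne k j
  exacts [h.2, h.1 k ⟨hkj, hk⟩]

theorem planeIndicator_sub (b : Fin n → ℤ) (e : Fin q → Fin n) {y z : Fin n → ℤ}
    (h : Near y z) :
    planeIndicator b e z - planeIndicator b e y =
      ∑ j with j ∉ Set.range e, planeIndicator b (vecCons j e) y *
        ((heaviside (b j - 1) (z j) - heaviside (b j - 1) (y j)) -
          (heaviside (b j) (z j) - heaviside (b j) (y j))) := by
  obtain rfl | hne := eq_or_ne y z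
  · simp
  obtain ⟨j, s, -, rfl⟩ := h.exists_single hne
  have hz (k : Fin n) (hk : k ≠ j) : (y + Pi.single j s : Fin n → ℤ) k = y k := by simp [hk]
  by_cases hj : j ∈ Set.range e
  · rw [planeIndicator_congr b fun k hk => hz k fun h => hk (h ▸ hj), sub_self]
    refine (Finset.sum_eq_zero fun k hk => ?_).symm
    rw [hz k fun h => (Finset.mem_filter.1 hk).2 (h ▸ hj)]
    ring
  · have hcons : planeIndicator b (vecCons j e) (y + Pi.single j s) =
        planeIndicator b (vecCons j e) y :=
      planeIndicator_congr b fun k hk => hz k fun h => hk ⟨0, h.symm⟩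
    rw [Finset.sum_eq_single j (fun k _ hk => by rw [hz k hk]; ring) (by simp_all),
      planeIndicator_eq_mul b hj, planeIndicator_eq_mul b hj y, hcons]
    ring

theorem cubeCoeff_sub_single_vecCons (b : Fin n → ℤ) {e : Fin q → Fin n} {j : Fin n}
    (hj : j ∉ Set.range e) (c : ℤ) (u : (Fin (q + 1) → Bool) → Fin n → ℤ) :
    cubeCoeff (b - Pi.single j c) (vecCons j e) u =
      planeIndicator b (vecCons j e) (u ⊥) * ∑ i : Fin (q + 1), (-1) ^ (i : ℕ) *
        ((heaviside (b j - c) (face u i true ⊥ j) - heaviside (b j - c) (u ⊥ j)) *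
          cupDiff (fun k y => heaviside (b (e k)) (y (e k))) (face u i true)) := by
  have htail : (Fin.tail fun (k : Fin (q + 1)) (y : Fin n → ℤ) =>
      heaviside ((b - Pi.single j c : Fin n → ℤ) (vecCons j e k)) (y (vecCons j e k))) =
      fun k y => heaviside (b (e k)) (y (e k)) := by
    funext k y
    have hne : e k ≠ j := fun h => hj ⟨k, h⟩
    simp [Fin.tail, hne]
  have hplane : planeIndicator (b - Pi.single j c) (vecCons j e) (u ⊥) =
      planeIndicator b (vecCons j e) (u ⊥) := by
    refine if_congr (forall₂_congr fun k hk => ?_) rfl rfl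
    have hne : k ≠ j := fun h => hk ⟨0, h.symm⟩
    simp [hne]
  rw [cubeCoeff, hplane, cupDiff, htail]
  simp only [Matrix.cons_val_zero, Pi.sub_apply, Pi.single_eq_same]

/-- The chain map property of the coefficients: where the singular cube `u` crosses the plane of a
`q`-cell, it enters or leaves one of the two `(q + 1)`-cells extending that cell in a further
direction `j`. -/
theorem coboundary_cubeCoeff (b : Fin n → ℤ) (e : Fin q → Fin n)
    {u : (Fin (q + 1) → Bool) → Fin n → ℤ} (hu : IsSingular Near u) :
    coboundary (cubeCoeff b e) u = ∑ j with j ∉ Set.range e,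
      (cubeCoeff (b - Pi.single j 1) (vecCons j e) u - cubeCoeff b (vecCons j e) u) := by
  set E := cupDiff fun k (y : Fin n → ℤ) => heaviside (b (e k)) (y (e k)) with hE
  have hclosed : coboundary E u = 0 := coboundary_cupDiff ..
  have hsplit : coboundary (cubeCoeff b e) u = ∑ i : Fin (q + 1), (-1) ^ (i : ℕ) *
      ((planeIndicator b e (face u i true ⊥) - planeIndicator b e (u ⊥)) * E (face u i true)) := by
    rw [← sub_eq_zero, ← mul_eq_zero_of_right (planeIndicator b e (u ⊥)) hclosed, coboundary,
      coboundary, Finset.mul_sum, ← Finset.sum_sub_distrib]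
    refine Finset.sum_congr rfl fun i _ => ?_
    simp only [cubeCoeff, face_false_bot, ← hE]
    ring
  rw [hsplit]
  simp only [planeIndicator_sub b e (hu.rel_bot_face _), Finset.sum_mul, Finset.mul_sum]
  rw [Finset.sum_comm]
  refine Finset.sum_congr rfl fun j hj => ?_
  have hj := (Finset.mem_filter.1 hj).2
  have h0 := cubeCoeff_sub_single_vecCons b hj 0 u
  rw [Pi.single_zero, sub_zero] at h0
  rw [cubeCoeff_sub_single_vecCons b hj, h0, ← mul_sub, ← Finset.sum_sub_distrib, Finset.mul_sum]
  refine Finset.sum_congr rfl fun i _ => ?_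
  rw [sub_zero]
  ring

theorem Near.eq_of_heaviside_ne {y z : Fin n → ℤ} (h : Near y z) {k : Fin n} {a t : ℤ}
    (hyz : heaviside a (y k) ≠ heaviside a (z k)) (ht : t = a ∨ t = a + 1) (hty : t ≠ y k) :
    t = z k := by
  obtain ⟨j, s, hs, rfl⟩ := h.exists_single fun h => hyz (by rw [h])
  rw [Pi.add_apply, Pi.single_apply] at hyz ⊢
  grind [heaviside]

theorem mem_range_of_cupDiff_ne_zero {b : Fin n → ℤ} {e : Fin q → Fin n}
    (he : Function.Injective e) {u : (Fin q → Bool) → Fin n → ℤ} (hu : IsSingular Near u)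
    (hcup : cupDiff (fun k (y : Fin n → ℤ) => heaviside (b (e k)) (y (e k))) u ≠ 0)
    {z : Fin n → ℤ} (hz : ∀ k ∉ Set.range e, z k = u ⊥ k)
    (hze : ∀ k, z (e k) = b (e k) ∨ z (e k) = b (e k) + 1) : z ∈ Set.range u := by
  induction q with
  | zero =>
    exact ⟨⊥, funext fun k => (hz k (by rintro ⟨i, -⟩; exact i.elim0)).symm⟩
  | succ q ih =>
    by_cases hzu : ∀ k, z (e k) = u ⊥ (e k)
    · refine ⟨⊥, funext fun j => ?_⟩
      by_cases hj : j ∈ Set.range e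
      · obtain ⟨k, rfl⟩ := hj
        exact (hzu k).symm
      · exact (hz j hj).symm
    push Not at hzu
    obtain ⟨k, hk⟩ := hzu
    obtain ⟨i, hcross, hface⟩ := exists_face_of_cupDiff_ne_zero hu (fun k l hkl y z hyz => by
      obtain h | h := hyz.eq_or_eq (he.ne hkl) <;> rw [h] <;> ring) hcup k
    have hnear := hu.rel_bot_face i
    have hzface : ∀ j ∉ Set.range (e ∘ k.succAbove), z j = face u i true ⊥ j := fun j hj => by
      obtain rfl | hjk := eq_or_ne j (e k)
      · exact hnear.eq_of_heaviside_ne hcross.symm (hze k) hk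
      rw [← (hnear.eq_or_eq hjk).resolve_right fun h => hcross (by rw [h])]
      refine hz j ?_
      rintro ⟨l, rfl⟩
      obtain ⟨l, rfl⟩ := Fin.exists_succAbove_eq fun h : l = k => hjk (h ▸ rfl)
      exact hj ⟨l, rfl⟩
    obtain ⟨x, hx⟩ := ih (he.comp Fin.succAbove_right_injective) (hu.face i true) hface hzface
      fun l => hze _
    exact ⟨_, hx⟩

theorem injective_of_range_eq {α β : Type*} [Finite α] {u v : α → β} (hv : Function.Injective v)
    (h : Set.range u = Set.range v) : Function.Injective u := by
  have hsection (a : α) : ∃ b, u b = v a := h.symm.subset (Set.mem_range_self a)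
  choose w hw using hsection
  have hcomp : Function.Injective (u ∘ w) := (funext hw : u ∘ w = v) ▸ hv
  exact hcomp.of_comp_right (Finite.surjective_of_injective hcomp.of_comp)

theorem range_eq_of_cubeCoeff_ne_zero {b : Fin n → ℤ} {e : Fin q → Fin n}
    (he : Function.Injective e) {u : (Fin q → Bool) → Fin n → ℤ} (hu : IsSingular Near u)
    (hb : cubeCoeff b e u ≠ 0) :
    Function.Injective u ∧ Set.range u = Set.range (cube b e) := by
  have hplane : ∀ k ∉ Set.range e, u ⊥ k = b k := by
    have h := left_ne_zero_of_mul hb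
    by_contra hne
    exact h (if_neg hne)
  have hmem (x) : ∃ y, u y = cube b e x :=
    mem_range_of_cupDiff_ne_zero he hu (right_ne_zero_of_mul hb)
      (fun k hk => by rw [cube_apply_of_notMem_range b x hk, hplane k hk])
      fun k => by rw [cube_apply b he]; cases x k <;> simp
  choose φ hφ using hmem
  have hcomp : u ∘ φ = cube b e := funext hφ
  have hinj : Function.Injective (u ∘ φ) := hcomp ▸ cube_injective b he
  have hφ_surjective : Function.Surjective φ := Finite.surjective_of_injective hinj.of_comp
  have hrange : Set.range u = Set.range (cube b e) := by rw [← hcomp, hφ_surjective.range_comp]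
  exact ⟨injective_of_range_eq (cube_injective b he) hrange, hrange⟩

end CubeCoeff

section Normalized

variable {n q : ℕ}

theorem reparam_update (π : Equiv.Perm (Fin q)) (r x : Fin q → Bool) (i : Fin q) (s : Bool) :
    reparam π r (Function.update x i s) =
      Function.update (reparam π r x) (π.symm i) (xor s (r (π.symm i))) := by
  funext j
  obtain rfl | hj := eq_or_ne j (π.symm i)
  · simp [reparam]
  · have hji : π j ≠ i := fun h => hj (by rw [← h, Equiv.symm_apply_apply])
    simp [reparam, hj, hji]

theorem IsSingular.comp_reparam {α : Type*} {r : α → α → Prop} {u : (Fin q → Bool) → α}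
    (hu : IsSingular r u) (π : Equiv.Perm (Fin q)) (ρ : Fin q → Bool) :
    IsSingular r (u ∘ reparam π ρ) := fun x i s => by
  simpa only [Function.comp_apply, reparam_update] using hu _ _ _

theorem cube_comp_perm (b : Fin n → ℤ) (e : Fin q → Fin n) (π : Equiv.Perm (Fin q)) :
    cube b (e ∘ π) = cube b e ∘ reparam π.symm fun _ => false := by
  funext x
  simp only [cube, Function.comp_apply, reparam, Bool.xor_false]
  rw [← Equiv.sum_comp π fun i => if x (π.symm i) then (Pi.single (e i) 1 : Fin n → ℤ) else 0]
  simp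

theorem le_cube (b : Fin n → ℤ) (e : Fin q → Fin n) (x : Fin q → Bool) : b ≤ cube b e x := by
  refine le_add_of_nonneg_right (Finset.sum_nonneg fun i _ => ?_)
  split_ifs
  exacts [Pi.single_nonneg.2 zero_le_one, le_rfl]

theorem mem_range_iff_exists_cube_ne (b : Fin n → ℤ) {e : Fin q → Fin n}
    (he : Function.Injective e) (k : Fin n) : k ∈ Set.range e ↔ ∃ x, cube b e x k ≠ b k := by
  refine ⟨?_, fun ⟨x, hx⟩ => by_contra fun hk => hx (cube_apply_of_notMem_range b x hk)⟩
  rintro ⟨i, rfl⟩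
  exact ⟨fun _ => true, by simp [cube_apply b he]⟩

theorem exists_perm_of_range_cube_eq {b b' : Fin n → ℤ} {e e' : Fin q → Fin n}
    (he : Function.Injective e) (he' : Function.Injective e')
    (h : Set.range (cube b' e') = Set.range (cube b e)) :
    b' = b ∧ ∃ π : Equiv.Perm (Fin q), e' = e ∘ π := by
  have hle {c d : Fin n → ℤ} {f f' : Fin q → Fin n}
      (h : Set.range (cube d f') = Set.range (cube c f)) : c ≤ d := by
    obtain ⟨x, hx⟩ := h ▸ Set.mem_range_self (f := cube d f') ⊥
    rw [← cube_bot d f', ← hx]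
    exact le_cube c f x
  obtain rfl : b' = b := le_antisymm (hle h.symm) (hle h)
  have hrange : Set.range e = Set.range e' := by
    ext k
    rw [mem_range_iff_exists_cube_ne b' he, mem_range_iff_exists_cube_ne b' he',
      ← Set.exists_range_iff (p := fun y : Fin n → ℤ => y k ≠ b' k), ← h, Set.exists_range_iff]
  refine ⟨rfl, (Equiv.ofInjective e' he').trans
    ((Equiv.setCongr hrange.symm).trans (Equiv.ofInjective e he).symm), funext fun i => ?_⟩
  simp [Equiv.apply_ofInjective_symm]

theorem exists_eq_cube_comp_reparam_of_range_eq {b : Fin n → ℤ} {e : Fin q → Fin n}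
    (he : Function.Injective e) {u : (Fin q → Bool) → Fin n → ℤ} (hu : IsSingular Near u)
    (hinj : Function.Injective u) (h : Set.range u = Set.range (cube b e)) :
    ∃ π r, u = cube b e ∘ reparam π r := by
  obtain ⟨b', e', r, he', rfl⟩ := hu.exists_eq_cube_comp_reparam hinj
  rw [(reparam_bijective 1 r).surjective.range_comp] at h
  obtain ⟨rfl, π, rfl⟩ := exists_perm_of_range_cube_eq he he' h
  exact ⟨_, _, by rw [cube_comp_perm, Function.comp_assoc, reparam_comp_reparam]⟩

theorem cubeCoeff_cube_comp_reparam (b : Fin n → ℤ) {e : Fin q → Fin n}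
    (he : Function.Injective e) (π : Equiv.Perm (Fin q)) (r : Fin q → Bool) :
    cubeCoeff b e (cube b e ∘ reparam π r) = reparamSign π r := by
  let s (k : Fin q) : ℤ := if r k then -1 else 1
  have hdet : (Matrix.of fun k i => s k * π.permMatrix ℤ k i).det = reparamSign π r := by
    rw [Matrix.det_mul_column, Matrix.det_permutation, mul_comm]
    rfl
  have hplane : planeIndicator b e ((cube b e ∘ reparam π r) ⊥) = 1 :=
    if_pos fun k hk => cube_apply_of_notMem_range b _ hk
  rw [cubeCoeff, hplane, one_mul, ← hdet]
  refine cupDiff_eq_det (c := fun k => if r k then 1 else 0) fun k x => ?_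
  rw [Finset.sum_eq_single (π k)]
  · cases hx : x (π k) <;> cases hr : r k <;>
      simp [heaviside, cube_apply b he, reparam, hx, hr, s, Equiv.Perm.permMatrix]
  · intro i _ hi
    simp [Equiv.Perm.permMatrix, hi.symm]
  · simp

theorem cubeCoeff_ne_zero_iff {b : Fin n → ℤ} {e : Fin q → Fin n} (he : Function.Injective e)
    {u : (Fin q → Bool) → Fin n → ℤ} (hu : IsSingular Near u) :
    cubeCoeff b e u ≠ 0 ↔ ∃ π r, u = cube b e ∘ reparam π r := by
  refine ⟨fun h => ?_, ?_⟩
  · obtain ⟨hinj, hrange⟩ := range_eq_of_cubeCoeff_ne_zero he hu h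
    exact exists_eq_cube_comp_reparam_of_range_eq he hu hinj hrange
  · rintro ⟨π, r, rfl⟩
    rw [cubeCoeff_cube_comp_reparam b he]
    exact left_ne_zero_of_mul_eq_one (reparamSign_mul_self π r)

theorem cubeCoeff_comp_reparam {b : Fin n → ℤ} {e : Fin q → Fin n} (he : Function.Injective e)
    {u : (Fin q → Bool) → Fin n → ℤ} (hu : IsSingular Near u) (π : Equiv.Perm (Fin q))
    (r : Fin q → Bool) :
    cubeCoeff b e (u ∘ reparam π r) = reparamSign π r * cubeCoeff b e u := by
  have hne {v : (Fin q → Bool) → Fin n → ℤ} (hv : IsSingular Near v) (h : cubeCoeff b e v ≠ 0)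
      (π r) : cubeCoeff b e (v ∘ reparam π r) = reparamSign π r * cubeCoeff b e v := by
    obtain ⟨π', r', rfl⟩ := (cubeCoeff_ne_zero_iff he hv).1 h
    rw [Function.comp_assoc, reparam_comp_reparam, cubeCoeff_cube_comp_reparam b he,
      cubeCoeff_cube_comp_reparam b he, reparamSign_mul, mul_comm]
  obtain h | h := ne_or_eq (cubeCoeff b e u) 0
  · exact hne hu h π r
  rw [h, mul_zero]
  by_contra h'
  have hinv := hne (hu.comp_reparam π r) h' π.symm (r ∘ π.symm)
  rw [Function.comp_assoc, reparam_leftInverse, Function.comp_id, h] at hinv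
  exact mul_ne_zero (left_ne_zero_of_mul_eq_one (reparamSign_mul_self _ _)) h' hinv.symm

end Normalized

section OrderedCube

open Matrix (vecCons)
open scoped Nat

variable {n q : ℕ} {X : Finset (Fin n → ℤ)}

/-- `u` is a singular cube in the digital image `X`: it sends edges of the standard cube to equal
or `c1`-adjacent points of `X`. -/
structure IsCubeIn (X : Finset (Fin n → ℤ)) (u : (Fin q → Bool) → Fin n → ℤ) : Prop where
  near : IsSingular Near u
  mem : ∀ x, u x ∈ X

/-- A cochain on the singular cubes of `X` that comes from the complex of oriented elementary
cubes: it vanishes on degenerate cubes and changes sign with the orientation. -/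
structure IsNormalized (X : Finset (Fin n → ℤ)) (Φ : ((Fin q → Bool) → Fin n → ℤ) → ℤ) :
    Prop where
  eq_zero : ∀ {u}, IsCubeIn X u → ¬Function.Injective u → Φ u = 0
  comp_reparam : ∀ {u}, IsCubeIn X u → ∀ π r, Φ (u ∘ reparam π r) = reparamSign π r * Φ u

theorem isNormalized_cubeCoeff (X : Finset (Fin n → ℤ)) (b : Fin n → ℤ) {e : Fin q → Fin n}
    (he : Function.Injective e) : IsNormalized X (cubeCoeff b e) where
  eq_zero hu hinj := by_contra fun h => hinj (range_eq_of_cubeCoeff_ne_zero he hu.near h).1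
  comp_reparam hu := cubeCoeff_comp_reparam he hu.near

theorem isNormalized_coboundary_cubeCoeff (X : Finset (Fin n → ℤ)) (b : Fin n → ℤ)
    {e : Fin q → Fin n} (he : Function.Injective e) :
    IsNormalized X (coboundary (cubeCoeff b e)) where
  eq_zero {u} hu hinj := by
    rw [coboundary_cubeCoeff b e hu.near]
    refine Finset.sum_eq_zero fun j hj => ?_
    have hcons : Function.Injective (vecCons j e) :=
      Fin.cons_injective_iff.2 ⟨(Finset.mem_filter.1 hj).2, he⟩
    rw [(isNormalized_cubeCoeff X _ hcons).eq_zero hu hinj,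
      (isNormalized_cubeCoeff X _ hcons).eq_zero hu hinj, sub_zero]
  comp_reparam {u} hu π r := by
    rw [coboundary_cubeCoeff b e hu.near, coboundary_cubeCoeff b e (hu.near.comp_reparam π r),
      Finset.mul_sum]
    refine Finset.sum_congr rfl fun j hj => ?_
    have hcons : Function.Injective (vecCons j e) :=
      Fin.cons_injective_iff.2 ⟨(Finset.mem_filter.1 hj).2, he⟩
    rw [mul_sub, ← cubeCoeff_comp_reparam hcons hu.near, ← cubeCoeff_comp_reparam hcons hu.near]

/-- An elementary `q`-cube contained in `X`, with an ordering of its nondegenerate directions. -/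
@[ext]
structure OrderedCube (X : Finset (Fin n → ℤ)) (q : ℕ) where
  base : Fin n → ℤ
  frame : Fin q → Fin n
  injective_frame : Function.Injective frame
  cube_mem : ∀ x, cube base frame x ∈ X

namespace OrderedCube

/-- The cube as a singular cube, its `i`-th coordinate running along `σ.frame i`. -/
def cube (σ : OrderedCube X q) : (Fin q → Bool) → Fin n → ℤ :=
  CubicalLefschetz.cube σ.base σ.frame

/-- The cochain dual to the cube, oriented by its frame. -/
noncomputable def coeff (σ : OrderedCube X q) : ((Fin q → Bool) → Fin n → ℤ) → ℤ :=
  cubeCoeff σ.base σ.frame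

theorem isCubeIn_cube (σ : OrderedCube X q) : IsCubeIn X σ.cube :=
  ⟨isSingular_cube _ _, σ.cube_mem⟩

theorem base_mem (σ : OrderedCube X q) : σ.base ∈ X :=
  cube_bot σ.base σ.frame ▸ σ.cube_mem ⊥

instance : Finite (OrderedCube X q) :=
  Finite.of_injective (fun σ => ((⟨σ.base, σ.base_mem⟩ : X), σ.frame)) fun _ _ h =>
    OrderedCube.ext (congrArg Subtype.val (congrArg Prod.fst h)) (congrArg Prod.snd h)

noncomputable instance : Fintype (OrderedCube X q) := Fintype.ofFinite _

theorem isNormalized_coeff (σ : OrderedCube X q) : IsNormalized X σ.coeff :=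
  isNormalized_cubeCoeff X _ σ.injective_frame

theorem coeff_ne_zero_iff (σ : OrderedCube X q) {u : (Fin q → Bool) → Fin n → ℤ}
    (hu : IsSingular Near u) : σ.coeff u ≠ 0 ↔ ∃ π r, u = σ.cube ∘ reparam π r :=
  cubeCoeff_ne_zero_iff σ.injective_frame hu

theorem coeff_ne_zero_iff_range_eq (σ : OrderedCube X q) {u : (Fin q → Bool) → Fin n → ℤ}
    (hu : IsSingular Near u) (hinj : Function.Injective u) :
    σ.coeff u ≠ 0 ↔ Set.range u = Set.range σ.cube := by
  refine ⟨fun h => (range_eq_of_cubeCoeff_ne_zero σ.injective_frame hu h).2, fun h => ?_⟩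
  exact (σ.coeff_ne_zero_iff hu).2
    (exists_eq_cube_comp_reparam_of_range_eq σ.injective_frame hu hinj h)

/-- The same cube with its directions reordered. -/
def perm (σ : OrderedCube X q) (π : Equiv.Perm (Fin q)) : OrderedCube X q where
  base := σ.base
  frame := σ.frame ∘ π
  injective_frame := σ.injective_frame.comp π.injective
  cube_mem x := by rw [cube_comp_perm]; exact σ.cube_mem _

theorem range_cube_eq_iff (σ τ : OrderedCube X q) :
    Set.range τ.cube = Set.range σ.cube ↔ ∃ π, σ.perm π = τ := by
  refine ⟨fun h => ?_, ?_⟩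
  · obtain ⟨hbase, π, hframe⟩ :=
      exists_perm_of_range_cube_eq σ.injective_frame τ.injective_frame h
    exact ⟨π, OrderedCube.ext hbase.symm hframe.symm⟩
  · rintro ⟨π, rfl⟩
    exact (congrArg Set.range (cube_comp_perm σ.base σ.frame π)).trans
      ((reparam_bijective _ _).surjective.range_comp _)

open Classical in
theorem card_filter_range_cube_eq (σ : OrderedCube X q) :
    Finset.card {τ : OrderedCube X q | Set.range τ.cube = Set.range σ.cube} = q ! := by
  have hinj : Function.Injective σ.perm := fun π π' h => Equiv.ext fun i =>
    σ.injective_frame (congrFun (congrArg frame h) i)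
  have himage : ({τ | Set.range τ.cube = Set.range σ.cube} : Finset (OrderedCube X q)) =
      Finset.univ.image σ.perm := by
    ext τ
    simp [range_cube_eq_iff]
  rw [himage, Finset.card_image_of_injective _ hinj, Finset.card_univ, Fintype.card_perm,
    Fintype.card_fin]

end OrderedCube

theorem IsCubeIn.exists_range_eq {u : (Fin q → Bool) → Fin n → ℤ} (hu : IsCubeIn X u)
    (hinj : Function.Injective u) : ∃ σ : OrderedCube X q, Set.range u = Set.range σ.cube := by
  obtain ⟨b, e, r, he, rfl⟩ := hu.near.exists_eq_cube_comp_reparam hinj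
  have hrange := (reparam_bijective 1 r).surjective.range_comp (cube b e)
  exact ⟨⟨b, e, he, fun x => Set.forall_mem_range.1
    (hrange ▸ Set.forall_mem_range.2 hu.mem : ∀ y ∈ Set.range (cube b e), y ∈ X) x⟩, hrange⟩

theorem IsNormalized.sum_mul_coeff {Φ : ((Fin q → Bool) → Fin n → ℤ) → ℤ} (hΦ : IsNormalized X Φ)
    {u : (Fin q → Bool) → Fin n → ℤ} (hu : IsCubeIn X u) :
    ∑ σ : OrderedCube X q, Φ σ.cube * σ.coeff u = q ! * Φ u := by
  classical
  by_cases hinj : Function.Injective u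
  · obtain ⟨σ₀, hσ₀⟩ := hu.exists_range_eq hinj
    have hterm (σ : OrderedCube X q) : Φ σ.cube * σ.coeff u =
        if Set.range σ.cube = Set.range σ₀.cube then Φ u else 0 := by
      split_ifs with h
      · obtain ⟨π, r, rfl⟩ := (σ.coeff_ne_zero_iff hu.near).1
          ((σ.coeff_ne_zero_iff_range_eq hu.near hinj).2 (hσ₀.trans h.symm))
        have hcoeff : σ.coeff (σ.cube ∘ reparam π r) = reparamSign π r :=
          cubeCoeff_cube_comp_reparam _ σ.injective_frame π r
        rw [hΦ.comp_reparam σ.isCubeIn_cube, hcoeff, mul_comm]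
      · have hne := mt (σ.coeff_ne_zero_iff_range_eq hu.near hinj).1 fun h' => h (h'.symm.trans hσ₀)
        rw [not_ne_iff.1 hne, mul_zero]
    rw [Finset.sum_congr rfl fun σ _ => hterm σ, ← Finset.sum_filter, Finset.sum_const,
      σ₀.card_filter_range_cube_eq, nsmul_eq_mul]
  · rw [hΦ.eq_zero hu hinj, mul_zero]
    exact Finset.sum_eq_zero fun σ _ => by rw [σ.isNormalized_coeff.eq_zero hu hinj, mul_zero]

end OrderedCube

section Trace

open scoped Nat

variable {n m l q : ℕ} {X : Finset (Fin n → ℤ)} {Y : Finset (Fin m → ℤ)} {Z : Finset (Fin l → ℤ)}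

/-- `f` is a `c1`-continuous map from `X` to `Y`. -/
structure IsDigitalMap (X : Finset (Fin n → ℤ)) (Y : Finset (Fin m → ℤ))
    (f : (Fin n → ℤ) → Fin m → ℤ) : Prop where
  mapsInto : MapsInto X Y f
  cont : c1Cont X f

theorem IsDigitalMap.near {f : (Fin n → ℤ) → Fin m → ℤ} (hf : IsDigitalMap X Y f)
    {x y : Fin n → ℤ} (hx : x ∈ X) (hy : y ∈ X) (h : Near x y) : Near (f x) (f y) := by
  obtain rfl | h := h
  exacts [.inl rfl, hf.cont x hx y hy h]

theorem IsDigitalMap.comp {g : (Fin m → ℤ) → Fin l → ℤ} {f : (Fin n → ℤ) → Fin m → ℤ}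
    (hg : IsDigitalMap Y Z g) (hf : IsDigitalMap X Y f) : IsDigitalMap X Z (g ∘ f) where
  mapsInto x hx := hg.mapsInto _ (hf.mapsInto x hx)
  cont x hx y hy h :=
    hg.near (hf.mapsInto x hx) (hf.mapsInto y hy) (hf.near hx hy (.inr h))

theorem IsDigitalMap.isCubeIn_comp {f : (Fin n → ℤ) → Fin m → ℤ} (hf : IsDigitalMap X Y f)
    {u : (Fin q → Bool) → Fin n → ℤ} (hu : IsCubeIn X u) : IsCubeIn Y (f ∘ u) where
  near x i s := hf.near (hu.mem _) (hu.mem _) (hu.near x i s)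
  mem x := hf.mapsInto _ (hu.mem x)

theorem IsNormalized.comp {Φ : ((Fin q → Bool) → Fin m → ℤ) → ℤ} (hΦ : IsNormalized Y Φ)
    {f : (Fin n → ℤ) → Fin m → ℤ} (hf : IsDigitalMap X Y f) :
    IsNormalized X fun u => Φ (f ∘ u) where
  eq_zero hu hinj := hΦ.eq_zero (hf.isCubeIn_comp hu) fun h => hinj h.of_comp
  comp_reparam hu := hΦ.comp_reparam (hf.isCubeIn_comp hu)

/-- The trace of the map induced by `f` on ordered `q`-chains, which is `q !` times the trace on
oriented cellular `q`-chains, each elementary cube being counted with all its orderings. -/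
noncomputable def cubeTrace (X : Finset (Fin n → ℤ)) (q : ℕ) (f : (Fin n → ℤ) → Fin n → ℤ) : ℤ :=
  ∑ σ : OrderedCube X q, σ.coeff (f ∘ σ.cube)

theorem cubeTrace_comp_comm {f : (Fin n → ℤ) → Fin m → ℤ} {g : (Fin m → ℤ) → Fin n → ℤ}
    (hf : IsDigitalMap X Y f) (hg : IsDigitalMap Y X g) (q : ℕ) :
    cubeTrace Y q (f ∘ g) = cubeTrace X q (g ∘ f) := by
  have hexpand {k l : ℕ} {X : Finset (Fin k → ℤ)} {Y : Finset (Fin l → ℤ)}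
      {f : (Fin k → ℤ) → Fin l → ℤ} {g : (Fin l → ℤ) → Fin k → ℤ} (hf : IsDigitalMap X Y f)
      (hg : IsDigitalMap Y X g) : q ! * cubeTrace X q (g ∘ f) =
        ∑ σ : OrderedCube X q, ∑ τ : OrderedCube Y q,
          σ.coeff (g ∘ τ.cube) * τ.coeff (f ∘ σ.cube) := by
    rw [cubeTrace, Finset.mul_sum]
    exact Finset.sum_congr rfl fun σ _ => ((σ.isNormalized_coeff.comp hg).sum_mul_coeff
      (hf.isCubeIn_comp σ.isCubeIn_cube)).symm
  refine mul_left_cancel₀ (Int.natCast_ne_zero.2 q.factorial_ne_zero) ?_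
  rw [hexpand hf hg, hexpand hg hf, Finset.sum_comm]
  simp only [mul_comm]

end Trace

section Prism

open scoped Nat

variable {n m q : ℕ} {X : Finset (Fin n → ℤ)} {Y : Finset (Fin m → ℤ)}

/-- The singular cube traced out by a homotopy with two stages `f₀`, `f₁` along the singular cube
`u`; its first coordinate is the time. -/
def prism {α β : Type*} (f₀ f₁ : α → β) (u : (Fin q → Bool) → α) (y : Fin (q + 1) → Bool) : β :=
  (if y 0 then f₁ else f₀) (u (Fin.tail y))

theorem face_zero_prism {α β : Type*} (f₀ f₁ : α → β) (u : (Fin q → Bool) → α) (s : Bool) :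
    face (prism f₀ f₁ u) 0 s = (if s then f₁ else f₀) ∘ u := by
  funext x
  simp [face, prism]

theorem face_succ_prism {α β : Type*} (f₀ f₁ : α → β) (u : (Fin (q + 1) → Bool) → α)
    (i : Fin (q + 1)) (s : Bool) :
    face (prism f₀ f₁ u) i.succ s = prism f₀ f₁ (face u i s) := by
  funext x
  have hcons : (i.succ.insertNth s x : Fin (q + 2) → Bool) =
      Fin.cons (x 0) (i.insertNth s (Fin.tail x) : Fin (q + 1) → Bool) := by
    refine Fin.insertNth_eq_iff.2 ⟨by simp, ?_⟩
    have h : i.succ.removeNth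
        (Fin.cons (x 0) (i.insertNth s (Fin.tail x) : Fin (q + 1) → Bool) : Fin (q + 2) → Bool) =
        Fin.cons (x 0) (i.removeNth (i.insertNth s (Fin.tail x) : Fin (q + 1) → Bool)) :=
      Fin.cons_comp_succ_succAbove ..
    rw [h, Fin.removeNth_insertNth, Fin.cons_self_tail]
  simp only [face, prism, hcons, Fin.cons_zero, Fin.tail_cons]

theorem coboundary_prism {α β R : Type*} [CommRing R] (f₀ f₁ : α → β)
    (Φ : ((Fin (q + 1) → Bool) → β) → R) (u : (Fin (q + 1) → Bool) → α) :
    coboundary Φ (prism f₀ f₁ u) =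
      Φ (f₁ ∘ u) - Φ (f₀ ∘ u) - coboundary (fun v => Φ (prism f₀ f₁ v)) u := by
  simp only [coboundary, Fin.sum_univ_succ (n := q + 1), face_zero_prism, face_succ_prism,
    Fin.val_zero, pow_zero, one_mul, Fin.val_succ, pow_succ, mul_neg_one, neg_mul,
    Finset.sum_neg_distrib, if_true, Bool.false_eq_true, if_false, sub_eq_add_neg]

theorem IsCubeIn.prism {f₀ f₁ : (Fin n → ℤ) → Fin m → ℤ} (h₀ : IsDigitalMap X Y f₀)
    (h₁ : IsDigitalMap X Y f₁) (h : ∀ x ∈ X, Near (f₀ x) (f₁ x)) {u : (Fin q → Bool) → Fin n → ℤ}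
    (hu : IsCubeIn X u) : IsCubeIn Y (prism f₀ f₁ u) where
  near y i s := by
    obtain rfl | ⟨i, rfl⟩ := Fin.eq_zero_or_eq_succ i
    · have hx := h _ (hu.mem (Fin.tail y))
      simp only [CubicalLefschetz.prism, Function.update_self, Fin.tail_update_zero]
      cases y 0 <;> cases s
      exacts [.inl rfl, hx, hx.symm, .inl rfl]
    · have hx := hu.near (Fin.tail y) i s
      simp only [CubicalLefschetz.prism, Fin.tail_update_succ,
        Function.update_of_ne (Fin.succ_ne_zero i).symm]
      cases y 0
      exacts [h₀.near (hu.mem _) (hu.mem _) hx, h₁.near (hu.mem _) (hu.mem _) hx]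
  mem y := by
    simp only [CubicalLefschetz.prism]
    split_ifs
    exacts [h₁.mapsInto _ (hu.mem _), h₀.mapsInto _ (hu.mem _)]

theorem prism_comp_reparam {α β : Type*} (f₀ f₁ : α → β) (u : (Fin q → Bool) → α)
    (π : Equiv.Perm (Fin q)) (r : Fin q → Bool) :
    prism f₀ f₁ (u ∘ reparam π r) = prism f₀ f₁ u ∘
      reparam (Equiv.Perm.decomposeFin.symm (0, π)) (Fin.cons false r : Fin (q + 1) → Bool) := by
  funext y
  have hzero : reparam (Equiv.Perm.decomposeFin.symm (0, π))
      (Fin.cons false r : Fin (q + 1) → Bool) y 0 = y 0 := by simp [reparam]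
  have htail : Fin.tail (reparam (Equiv.Perm.decomposeFin.symm (0, π))
      (Fin.cons false r : Fin (q + 1) → Bool) y) = reparam π r (Fin.tail y) := by
    funext i
    simp [reparam, Fin.tail]
  simp only [prism, Function.comp_apply, hzero, htail]

theorem reparamSign_decomposeFin_symm (π : Equiv.Perm (Fin q)) (r : Fin q → Bool) :
    reparamSign (Equiv.Perm.decomposeFin.symm (0, π)) (Fin.cons false r : Fin (q + 1) → Bool) =
      reparamSign π r := by
  simp [reparamSign, Fin.prod_univ_succ]

theorem IsNormalized.comp_prism {Φ : ((Fin (q + 1) → Bool) → Fin m → ℤ) → ℤ}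
    (hΦ : IsNormalized Y Φ) {f₀ f₁ : (Fin n → ℤ) → Fin m → ℤ} (h₀ : IsDigitalMap X Y f₀)
    (h₁ : IsDigitalMap X Y f₁) (h : ∀ x ∈ X, Near (f₀ x) (f₁ x)) :
    IsNormalized X fun u => Φ (CubicalLefschetz.prism f₀ f₁ u) where
  eq_zero {u} hu hinj := hΦ.eq_zero (hu.prism h₀ h₁ h) fun hprism => hinj fun x x' hx => by
    have hcons : (Fin.cons false x : Fin (q + 1) → Bool) = Fin.cons false x' :=
      hprism (by simp [CubicalLefschetz.prism, hx])
    exact Fin.cons_right_injective _ hcons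
  comp_reparam {u} hu π r := by
    rw [prism_comp_reparam, hΦ.comp_reparam (hu.prism h₀ h₁ h), reparamSign_decomposeFin_symm]

theorem IsNormalized.sum_mul_coboundary_coeff {Φ : ((Fin q → Bool) → Fin n → ℤ) → ℤ}
    (hΦ : IsNormalized X Φ) {u : (Fin (q + 1) → Bool) → Fin n → ℤ} (hu : IsCubeIn X u) :
    ∑ σ : OrderedCube X q, Φ σ.cube * coboundary σ.coeff u = q ! * coboundary Φ u := by
  have hface (i s) : IsCubeIn X (face u i s) := ⟨hu.near.face i s, fun x => hu.mem _⟩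
  simp only [coboundary, Finset.mul_sum]
  rw [Finset.sum_comm]
  refine Finset.sum_congr rfl fun i _ => ?_
  rw [mul_left_comm, mul_sub, ← hΦ.sum_mul_coeff (hface i true), ← hΦ.sum_mul_coeff (hface i false),
    ← Finset.sum_sub_distrib, Finset.mul_sum]
  exact Finset.sum_congr rfl fun σ _ => by ring

/-- `q !` times the trace of `∂P` on cellular `q`-chains, where `P` is the chain homotopy induced by
a homotopy with two stages `f₀`, `f₁`. -/
noncomputable def homotopyTrace (X : Finset (Fin n → ℤ)) (q : ℕ)
    (f₀ f₁ : (Fin n → ℤ) → Fin n → ℤ) : ℤ :=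
  ∑ σ : OrderedCube X q, coboundary σ.coeff (prism f₀ f₁ σ.cube)

theorem cubeTrace_zero_sub (f₀ f₁ : (Fin n → ℤ) → Fin n → ℤ) :
    cubeTrace X 0 f₁ - cubeTrace X 0 f₀ = homotopyTrace X 0 f₀ f₁ := by
  rw [cubeTrace, cubeTrace, homotopyTrace, ← Finset.sum_sub_distrib]
  refine Finset.sum_congr rfl fun σ _ => ?_
  simp [coboundary, face_zero_prism]

theorem cubeTrace_succ_sub {f₀ f₁ : (Fin n → ℤ) → Fin n → ℤ} (h₀ : IsDigitalMap X X f₀)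
    (h₁ : IsDigitalMap X X f₁) (h : ∀ x ∈ X, Near (f₀ x) (f₁ x)) (q : ℕ) :
    cubeTrace X (q + 1) f₁ - cubeTrace X (q + 1) f₀ =
      homotopyTrace X (q + 1) f₀ f₁ + (q + 1) * homotopyTrace X q f₀ f₁ := by
  have hcyclic : (q + 1) * homotopyTrace X q f₀ f₁ = ∑ σ : OrderedCube X (q + 1),
      coboundary (fun u => σ.coeff (prism f₀ f₁ u)) σ.cube := by
    refine mul_left_cancel₀ (Int.natCast_ne_zero.2 q.factorial_ne_zero) ?_
    calc (q ! : ℤ) * ((q + 1) * homotopyTrace X q f₀ f₁)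
        = ∑ σ : OrderedCube X q, ∑ τ : OrderedCube X (q + 1),
            coboundary σ.coeff τ.cube * τ.coeff (prism f₀ f₁ σ.cube) := by
          rw [← mul_assoc, homotopyTrace, Finset.mul_sum]
          refine Finset.sum_congr rfl fun σ _ => ?_
          have hboundary : IsNormalized X (coboundary σ.coeff) :=
            isNormalized_coboundary_cubeCoeff X σ.base σ.injective_frame
          rw [hboundary.sum_mul_coeff (σ.isCubeIn_cube.prism h₀ h₁ h), Nat.factorial_succ]
          push_cast
          ring
      _ = ∑ τ : OrderedCube X (q + 1), ∑ σ : OrderedCube X q,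
            τ.coeff (prism f₀ f₁ σ.cube) * coboundary σ.coeff τ.cube := by
          rw [Finset.sum_comm]
          simp only [mul_comm]
      _ = _ := by
          rw [Finset.mul_sum]
          exact Finset.sum_congr rfl fun τ _ =>
            (τ.isNormalized_coeff.comp_prism h₀ h₁ h).sum_mul_coboundary_coeff τ.isCubeIn_cube
  rw [hcyclic, homotopyTrace, cubeTrace, cubeTrace, ← Finset.sum_sub_distrib,
    ← Finset.sum_add_distrib]
  refine Finset.sum_congr rfl fun σ _ => ?_
  rw [coboundary_prism, sub_add_cancel]

end Prism

section LefschetzSum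

open scoped Nat

variable {n m l : ℕ} {X : Finset (Fin n → ℤ)} {Y : Finset (Fin m → ℤ)} {Z : Finset (Fin l → ℤ)}

/-- The alternating sum of the traces on cellular chains of dimension at most `N`. -/
noncomputable def lefschetzSum (X : Finset (Fin n → ℤ)) (N : ℕ) (f : (Fin n → ℤ) → Fin n → ℤ) :
    ℚ :=
  ∑ q ∈ Finset.range (N + 1), (-1) ^ q * (cubeTrace X q f / q ! : ℚ)

theorem lefschetzSum_sub {f₀ f₁ : (Fin n → ℤ) → Fin n → ℤ} (h₀ : IsDigitalMap X X f₀)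
    (h₁ : IsDigitalMap X X f₁) (h : ∀ x ∈ X, Near (f₀ x) (f₁ x)) (N : ℕ) :
    lefschetzSum X N f₁ - lefschetzSum X N f₀ =
      (-1) ^ N * (homotopyTrace X N f₀ f₁ / N ! : ℚ) := by
  rw [lefschetzSum, lefschetzSum, ← Finset.sum_sub_distrib]
  induction N with
  | zero => simp [← cubeTrace_zero_sub]
  | succ N ih =>
    have hstep : (cubeTrace X (N + 1) f₁ - cubeTrace X (N + 1) f₀ : ℚ) =
        homotopyTrace X (N + 1) f₀ f₁ + (N + 1) * homotopyTrace X N f₀ f₁ :=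
      mod_cast cubeTrace_succ_sub h₀ h₁ h N
    have hfac : (N ! : ℚ) ≠ 0 := Nat.cast_ne_zero.2 N.factorial_ne_zero
    rw [Finset.sum_range_succ, ih, ← mul_sub, ← sub_div, hstep, Nat.factorial_succ]
    push_cast
    field_simp
    ring

theorem isEmpty_orderedCube (X : Finset (Fin n → ℤ)) {q : ℕ} (hq : n < q) :
    IsEmpty (OrderedCube X q) where
  false σ := hq.not_ge (by simpa using Fintype.card_le_of_injective _ σ.injective_frame)

theorem lefschetzSum_eq_of_near {f₀ f₁ : (Fin n → ℤ) → Fin n → ℤ} (h₀ : IsDigitalMap X X f₀)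
    (h₁ : IsDigitalMap X X f₁) (h : ∀ x ∈ X, Near (f₀ x) (f₁ x)) {N : ℕ} (hN : n < N) :
    lefschetzSum X N f₀ = lefschetzSum X N f₁ := by
  have := isEmpty_orderedCube X hN
  rw [eq_comm, ← sub_eq_zero, lefschetzSum_sub h₀ h₁ h, homotopyTrace, Finset.univ_eq_empty,
    Finset.sum_empty, Int.cast_zero, zero_div, mul_zero]

theorem lefschetzSum_congr {f₀ f₁ : (Fin n → ℤ) → Fin n → ℤ} (h : ∀ x ∈ X, f₀ x = f₁ x) (N : ℕ) :
    lefschetzSum X N f₀ = lefschetzSum X N f₁ := by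
  have hcomp (q) (σ : OrderedCube X q) : f₀ ∘ σ.cube = f₁ ∘ σ.cube :=
    funext fun x => h _ (σ.cube_mem x)
  simp only [lefschetzSum, cubeTrace, hcomp]

theorem lefschetzSum_eq_of_homotopic {f₀ f₁ : (Fin n → ℤ) → Fin n → ℤ}
    (h : c1Homotopic X X f₀ f₁) {N : ℕ} (hN : n < N) :
    lefschetzSum X N f₀ = lefschetzSum X N f₁ := by
  obtain ⟨k, H, hmem, hzero, hlast, hnear, hcont⟩ := h
  have hmap : ∀ t ≤ k, IsDigitalMap X X fun x => H x t := fun t ht =>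
    ⟨fun x hx => hmem x hx t ht, hcont t ht⟩
  have hstage (t) (ht : t ≤ k) : lefschetzSum X N f₀ = lefschetzSum X N fun x => H x t := by
    induction t with
    | zero => exact lefschetzSum_congr (fun x hx => (hzero x hx).symm) N
    | succ t ih =>
      exact (ih (by omega)).trans (lefschetzSum_eq_of_near (hmap t (by omega)) (hmap _ ht)
        (fun x hx => hnear x hx t ht) hN)
  exact (hstage k le_rfl).trans (lefschetzSum_congr hlast N)

theorem IsDigitalMap.comp_homotopic {f : (Fin m → ℤ) → Fin l → ℤ} (hf : IsDigitalMap Y Z f)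
    {g₀ g₁ : (Fin n → ℤ) → Fin m → ℤ} (h : c1Homotopic X Y g₀ g₁) :
    c1Homotopic X Z (f ∘ g₀) (f ∘ g₁) := by
  obtain ⟨k, H, hmem, hzero, hlast, hnear, hcont⟩ := h
  exact ⟨k, fun x t => f (H x t), fun x hx t ht => hf.mapsInto _ (hmem x hx t ht),
    fun x hx => congrArg f (hzero x hx), fun x hx => congrArg f (hlast x hx),
    fun x hx t ht => hf.near (hmem x hx t (by omega)) (hmem x hx _ ht) (hnear x hx t ht),
    fun t ht x hx y hy hxy =>
      hf.near (hmem x hx t ht) (hmem y hy t ht) (hcont t ht x hx y hy hxy)⟩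

end LefschetzSum

section CubicalLefschetzNumber

open scoped Nat

variable {n m q : ℕ} {X : Finset (Fin n → ℤ)} {Y : Finset (Fin m → ℤ)}

theorem coe_eCube_image (b : Fin n → ℤ) {e : Fin q → Fin n} (he : Function.Injective e) :
    (eCube b (Finset.univ.image e) : Set (Fin n → ℤ)) = Set.range (cube b e) := by
  have hvertex {s : Finset (Fin n)} (hs : s ⊆ Finset.univ.image e) :
      (fun k => b k + if k ∈ s then 1 else 0) = cube b e fun i => decide (e i ∈ s) := by
    funext k
    by_cases hk : k ∈ Set.range e
    · obtain ⟨i, rfl⟩ := hk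
      simp [cube_apply b he]
    · have hks : k ∉ s := fun h => hk (by simpa using hs h)
      simp [cube_apply_of_notMem_range b _ hk, hks]
  ext y
  simp only [eCube, Finset.coe_image, Set.mem_image, Finset.mem_coe, Finset.mem_powerset,
    Set.mem_range]
  constructor
  · rintro ⟨s, hs, rfl⟩
    exact ⟨_, (hvertex hs).symm⟩
  · rintro ⟨x, rfl⟩
    have hs : ({i | x i = true} : Finset (Fin q)).image e ⊆ Finset.univ.image e :=
      Finset.image_subset_image (Finset.filter_subset _ _)
    refine ⟨_, hs, (hvertex hs).trans (congrArg (cube b e) (funext fun i => ?_))⟩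
    simp [he.eq_iff]

theorem cubeSign_eq {f : (Fin n → ℤ) → Fin n → ℤ} {a : Fin n → ℤ} {D : Finset (Fin n)}
    {π : Equiv.Perm {i // i ∈ D}} {s : {i // i ∈ D} → ℤ} (hs : ∀ i, s i = 1 ∨ s i = -1)
    (hf : ∀ x ∈ eCube a D, ∀ i : {i // i ∈ D}, f x i = f a i + s i * (x (π i) - a (π i))) :
    cubeSign f a D = Equiv.Perm.sign π * ∏ i, s i := by
  have hex : ∃ p : Equiv.Perm {i // i ∈ D} × ({i // i ∈ D} → ℤ), (∀ i, p.2 i = 1 ∨ p.2 i = -1) ∧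
      ∀ x ∈ eCube a D, ∀ i : {i // i ∈ D}, f x i = f a i + p.2 i * (x (p.1 i) - a (p.1 i)) :=
    ⟨(π, s), hs, hf⟩
  suffices h : hex.choose = (π, s) by rw [cubeSign, dif_pos hex, h]
  obtain ⟨-, hf'⟩ := hex.choose_spec
  generalize hex.choose = p at hf'
  have hvertex (i : {i // i ∈ D}) : s i = p.2 i * if p.1 i = π i then 1 else 0 := by
    have hx : (fun k => a k + if k ∈ ({↑(π i)} : Finset (Fin n)) then 1 else 0) ∈ eCube a D :=
      Finset.mem_image_of_mem _ (by simp)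
    simpa [← Subtype.ext_iff] using (hf _ hx i).symm.trans (hf' _ hx i)
  have hπ (i) : p.1 i = π i := by
    by_contra h
    have hi := hvertex i
    rw [if_neg h, mul_zero] at hi
    have := hs i
    omega
  exact Prod.ext (Equiv.ext hπ) (funext fun i => by simpa [hπ] using (hvertex i).symm)

namespace OrderedCube

/-- The set of nondegenerate directions. -/
def directions (σ : OrderedCube X q) : Finset (Fin n) := Finset.univ.image σ.frame

theorem card_directions (σ : OrderedCube X q) : σ.directions.card = q := by
  rw [directions, Finset.card_image_of_injective _ σ.injective_frame, Finset.card_fin]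

theorem coe_eCube_directions (σ : OrderedCube X q) :
    (eCube σ.base σ.directions : Set (Fin n → ℤ)) = Set.range σ.cube :=
  coe_eCube_image σ.base σ.injective_frame

theorem eCube_directions_subset (σ : OrderedCube X q) : eCube σ.base σ.directions ⊆ X := by
  rw [← Finset.coe_subset, σ.coe_eCube_directions]
  exact Set.range_subset_iff.2 σ.cube_mem

theorem cubeSign_eq_reparamSign (σ : OrderedCube X q) {f : (Fin n → ℤ) → Fin n → ℤ}
    {π : Equiv.Perm (Fin q)} {r : Fin q → Bool} (hf : f ∘ σ.cube = σ.cube ∘ reparam π r) :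
    cubeSign f σ.base σ.directions = reparamSign π r := by
  have hmem (i) : σ.frame i ∈ σ.directions := Finset.mem_image_of_mem _ (Finset.mem_univ i)
  let E : Fin q ≃ {k // k ∈ σ.directions} :=
    Equiv.ofBijective (fun i => ⟨σ.frame i, hmem i⟩)
      ⟨fun i j h => σ.injective_frame (congrArg Subtype.val h), fun ⟨k, hk⟩ => by
        simpa [directions, Subtype.ext_iff] using hk⟩
  have hE (i) : (E i : Fin n) = σ.frame i := rfl
  have hcube (x i) : σ.cube x (σ.frame i) = σ.base (σ.frame i) + if x i then 1 else 0 :=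
    cube_apply _ σ.injective_frame x i
  have hbase : σ.cube ⊥ = σ.base := cube_bot _ _
  have happly (x) : f (σ.cube x) = σ.cube (reparam π r x) := congrFun hf x
  rw [cubeSign_eq (π := E.permCongr π) (s := fun k => if r (E.symm k) then -1 else 1),
    Equiv.Perm.sign_permCongr, ← E.prod_comp]
  · simp only [Equiv.symm_apply_apply, reparamSign]
  · intro k
    split_ifs <;> simp
  · intro y hy k
    obtain ⟨i, rfl⟩ := E.surjective k
    obtain ⟨x, rfl⟩ := σ.coe_eCube_directions.subset hy
    have hfbase : f σ.base = σ.cube (reparam π r ⊥) := by rw [← happly, hbase]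
    simp only [Equiv.permCongr_apply, Equiv.symm_apply_apply, hE, hfbase, happly, hcube, reparam,
      Pi.bot_apply]
    obtain hx | hx := (x (π i)).eq_false_or_eq_true <;>
      obtain hr | hr := (r i).eq_false_or_eq_true <;> simp [hx, hr]

theorem coeff_comp_cube (σ : OrderedCube X q) {f : (Fin n → ℤ) → Fin n → ℤ}
    (hf : IsDigitalMap X X f) :
    σ.coeff (f ∘ σ.cube) =
      if (eCube σ.base σ.directions).image f = eCube σ.base σ.directions then
        cubeSign f σ.base σ.directions else 0 := by
  have hnear := (hf.isCubeIn_comp σ.isCubeIn_cube).near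
  have himage : (eCube σ.base σ.directions).image f = eCube σ.base σ.directions ↔
      Set.range (f ∘ σ.cube) = Set.range σ.cube := by
    rw [← Finset.coe_inj, Finset.coe_image, σ.coe_eCube_directions, Set.range_comp]
  split_ifs with h
  · obtain ⟨π, r, hπr⟩ : ∃ π r, f ∘ σ.cube = σ.cube ∘ reparam π r := by
      have hrange := himage.1 h
      exact exists_eq_cube_comp_reparam_of_range_eq σ.injective_frame hnear
        (injective_of_range_eq (cube_injective _ σ.injective_frame) hrange) hrange
    rw [σ.cubeSign_eq_reparamSign hπr, hπr]
    exact cubeCoeff_cube_comp_reparam _ σ.injective_frame π r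
  · refine by_contra fun hne => h (himage.2 ?_)
    exact (range_eq_of_cubeCoeff_ne_zero σ.injective_frame hnear hne).2

theorem directions_eq_iff (σ τ : OrderedCube X q) :
    τ.base = σ.base ∧ τ.directions = σ.directions ↔ Set.range τ.cube = Set.range σ.cube := by
  constructor
  · rintro ⟨hbase, hdir⟩
    rw [← coe_eCube_directions, ← coe_eCube_directions, hbase, hdir]
  · rw [range_cube_eq_iff]
    rintro ⟨π, rfl⟩
    refine ⟨rfl, ?_⟩
    simp only [directions, perm, ← Finset.image_image, Finset.image_univ_equiv]

theorem exists_of_eCube_subset {a : Fin n → ℤ} {D : Finset (Fin n)} (h : eCube a D ⊆ X)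
    (hD : D.card = q) : ∃ σ : OrderedCube X q, σ.base = a ∧ σ.directions = D := by
  have hinj : Function.Injective (D.orderEmbOfFin hD) := (D.orderEmbOfFin hD).injective
  have himage : Finset.univ.image (D.orderEmbOfFin hD) = D := D.image_orderEmbOfFin_univ hD
  refine ⟨⟨a, D.orderEmbOfFin hD, hinj, fun x => h ?_⟩, rfl, himage⟩
  have hx := (coe_eCube_image a hinj).symm.subset (Set.mem_range_self x)
  rwa [himage] at hx

open Classical in
theorem sum_base_directions (ψ : (Fin n → ℤ) → Finset (Fin n) → ℤ) :
    ∑ σ : OrderedCube X q, ψ σ.base σ.directions =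
      q ! * ∑ a ∈ X, ∑ D : Finset (Fin n) with D.card = q, if eCube a D ⊆ X then ψ a D else 0 := by
  let cubes : Finset ((Fin n → ℤ) × Finset (Fin n)) :=
    {c ∈ X ×ˢ Finset.univ.filter fun D => D.card = q | eCube c.1 c.2 ⊆ X}
  have hcubes (σ : OrderedCube X q) : (σ.base, σ.directions) ∈ cubes := by
    simp [cubes, σ.base_mem, σ.card_directions, σ.eCube_directions_subset]
  rw [← Finset.sum_product', ← Finset.sum_filter, Finset.mul_sum,
    ← Finset.sum_fiberwise_of_maps_to fun σ _ => hcubes σ]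
  refine Finset.sum_congr rfl fun ⟨a, D⟩ hc => ?_
  obtain ⟨⟨-, hD⟩, h⟩ : (a ∈ X ∧ D.card = q) ∧ eCube a D ⊆ X := by simpa [cubes] using hc
  obtain ⟨σ₀, rfl, rfl⟩ := exists_of_eCube_subset h hD
  simp only [Prod.mk.injEq, directions_eq_iff]
  rw [Finset.sum_congr rfl fun σ hσ => ?_, Finset.sum_const, σ₀.card_filter_range_cube_eq,
    nsmul_eq_mul]
  obtain ⟨hbase, hdir⟩ := (directions_eq_iff _ _).2 (Finset.mem_filter.1 hσ).2
  rw [hbase, hdir]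

end OrderedCube

theorem cubLef_eq_lefschetzSum {f : (Fin n → ℤ) → Fin n → ℤ} (hf : IsDigitalMap X X f) {N : ℕ}
    (hN : n ≤ N) : (cubLef X f : ℚ) = lefschetzSum X N f := by
  classical
  let ε (a : Fin n → ℤ) (D : Finset (Fin n)) : ℤ :=
    if (eCube a D).image f = eCube a D then cubeSign f a D else 0
  have htrace (q : ℕ) : (cubeTrace X q f / q ! : ℚ) =
      ∑ a ∈ X, ∑ D : Finset (Fin n) with D.card = q, (if eCube a D ⊆ X then ε a D else 0 : ℤ) := by
    rw [div_eq_iff (Nat.cast_ne_zero.2 q.factorial_ne_zero), mul_comm]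
    norm_cast
    rw [← OrderedCube.sum_base_directions]
    exact Finset.sum_congr rfl fun σ _ => σ.coeff_comp_cube hf
  have hcard : ∀ D ∈ (Finset.univ : Finset (Finset (Fin n))), D.card ∈ Finset.range (N + 1) :=
    fun D _ => Finset.mem_range_succ_iff.2 ((card_finset_fin_le D).trans hN)
  have hsum : cubLef X f = ∑ q ∈ Finset.range (N + 1), (-1) ^ q *
      ∑ a ∈ X, ∑ D : Finset (Fin n) with D.card = q, if eCube a D ⊆ X then ε a D else 0 := by
    simp only [Finset.mul_sum]
    rw [Finset.sum_comm, cubLef]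
    refine Finset.sum_congr rfl fun a _ => ?_
    refine (Finset.sum_fiberwise_of_maps_to hcard _).symm.trans ?_
    refine Finset.sum_congr rfl fun q _ => Finset.sum_congr rfl fun D hD => ?_
    rw [← (Finset.mem_filter.1 hD).2, ← ite_and, mul_ite, mul_zero]
  simp only [lefschetzSum, htrace, hsum]
  push_cast
  rfl

theorem exists_cubLef_eq {g : (Fin n → ℤ) → Fin m → ℤ} {h : (Fin m → ℤ) → Fin n → ℤ}
    (hg : IsDigitalMap X Y g) (hh : IsDigitalMap Y X h) (hhg : c1Homotopic X X (h ∘ g) id)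
    {f : (Fin n → ℤ) → Fin n → ℤ} (hf : IsDigitalMap X X f) :
    ∃ f', IsDigitalMap Y Y f' ∧ cubLef Y f' = cubLef X f := by
  refine ⟨g ∘ (f ∘ h), hg.comp (hf.comp hh), Int.cast_injective (α := ℚ) ?_⟩
  rw [cubLef_eq_lefschetzSum (hg.comp (hf.comp hh)) (N := n + m + 1) (by omega),
    cubLef_eq_lefschetzSum hf (N := n + m + 1) (by omega)]
  calc lefschetzSum Y (n + m + 1) (g ∘ (f ∘ h))
      = lefschetzSum X (n + m + 1) (f ∘ (h ∘ g)) := by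
        simp only [lefschetzSum, cubeTrace_comp_comm hg (hf.comp hh), Function.comp_assoc]
    _ = lefschetzSum X (n + m + 1) f :=
        lefschetzSum_eq_of_homotopic (hf.comp_homotopic hhg) (by omega)

end CubicalLefschetzNumber

end CubicalLefschetz

theorem cubLef_spectrum_homotopy_invariant_general {n m : ℕ}
    (X : Finset (Fin n → ℤ)) (Y : Finset (Fin m → ℤ))
    (g : (Fin n → ℤ) → (Fin m → ℤ)) (h : (Fin m → ℤ) → (Fin n → ℤ))
    (hgXY : MapsInto X Y g) (hhYX : MapsInto Y X h)
    (hg : c1Cont X g) (hh : c1Cont Y h)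
    (hhg : c1Homotopic X X (h ∘ g) id) (hgh : c1Homotopic Y Y (g ∘ h) id) :
    {z : ℤ | ∃ f : (Fin n → ℤ) → (Fin n → ℤ),
        MapsInto X X f ∧ c1Cont X f ∧ cubLef X f = z} =
      {z : ℤ | ∃ f' : (Fin m → ℤ) → (Fin m → ℤ),
        MapsInto Y Y f' ∧ c1Cont Y f' ∧ cubLef Y f' = z} := by
  ext z
  constructor
  · rintro ⟨f, hf, hfc, rfl⟩
    obtain ⟨f', ⟨hf', hfc'⟩, hz⟩ :=
      CubicalLefschetz.exists_cubLef_eq ⟨hgXY, hg⟩ ⟨hhYX, hh⟩ hhg ⟨hf, hfc⟩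
    exact ⟨f', hf', hfc', hz⟩
  · rintro ⟨f, hf, hfc, rfl⟩
    obtain ⟨f', ⟨hf', hfc'⟩, hz⟩ :=
      CubicalLefschetz.exists_cubLef_eq ⟨hhYX, hh⟩ ⟨hgXY, hg⟩ hgh ⟨hf, hfc⟩
    exact ⟨f', hf', hfc', hz⟩

/-- Let `X ⊆ ℤ^n` and `Y ⊆ ℤ^m` (`n, m ≤ 3`) be finite digital images with
`c1`-adjacency that are homotopy equivalent: there are `c1`-continuous maps `g : X → Y`
and `h : Y → X` with `h ∘ g ≃ id_X` and `g ∘ h ≃ id_Y`. Then the cubical Lefschetz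
spectra of `X` and `Y` coincide. -/
theorem cubLef_spectrum_homotopy_invariant {n m : ℕ} (hn : n ≤ 3) (hm : m ≤ 3)
    (X : Finset (Fin n → ℤ)) (Y : Finset (Fin m → ℤ))
    (g : (Fin n → ℤ) → (Fin m → ℤ)) (h : (Fin m → ℤ) → (Fin n → ℤ))
    (hgXY : MapsInto X Y g) (hhYX : MapsInto Y X h)
    (hg : c1Cont X g) (hh : c1Cont Y h)
    (hhg : c1Homotopic X X (h ∘ g) id) (hgh : c1Homotopic Y Y (g ∘ h) id) :
    {z : ℤ | ∃ f : (Fin n → ℤ) → (Fin n → ℤ),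
        MapsInto X X f ∧ c1Cont X f ∧ cubLef X f = z} =
      {z : ℤ | ∃ f' : (Fin m → ℤ) → (Fin m → ℤ),
        MapsInto Y Y f' ∧ c1Cont Y f' ∧ cubLef Y f' = z} :=
  cubLef_spectrum_homotopy_invariant_general X Y g h hgXY hhYX hg hh hhg hgh
end
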